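/- arXiv:2402.02575 — 2 statements merged into one kernel-verified Lean document; each statement's English description precedes it below -/
import Mathlib

section
/- For every ε > 0 there exists an fiid labelling f : X → (V → Fin 4) of the 4-regular tree T_4 (where the labels 0, 1, 2 are colors and the label 3 is 'red') such that for μ-a.e. x ∈ X: for every vertex v with f(x)(v) ≠ 3 and every neighbour u of v one has f(x)(u) ≠ f(x)(v); and for every vertex v, μ({x : f(x)(v) = 3}) ≤ ε. -/
open MeasureTheory

namespace T4

section tree
variable {V : Type} {G : SimpleGraph V}

lemma t1 (hT : G.IsTree) (u : V) {v w : V} (h : G.Adj v w) :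
    G.dist u v = G.dist u w + 1 ∨ G.dist u w = G.dist u v + 1 :=
  hT.dist_eq_dist_add_one_of_adj u h

lemma t2 (hT : G.IsTree) {x m : V} (h : x ≠ m) :
    ∃ y, G.Adj x y ∧ G.dist y m + 1 = G.dist x m := by
  obtain ⟨p, hp⟩ := hT.connected.exists_walk_length_eq_dist x m
  cases p with
  | nil => exact absurd rfl h
  | cons hadj q =>
    rename_i y
    refine ⟨y, hadj, ?_⟩
    have h1 := SimpleGraph.dist_le q
    have h2 := t1 hT m hadj
    rw [SimpleGraph.dist_comm (u := m), SimpleGraph.dist_comm (u := m)] at h2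
    simp only [SimpleGraph.Walk.length_cons] at hp
    omega

lemma t3 (hT : G.IsTree) {x y z m : V} (hy : G.Adj x y) (hz : G.Adj x z)
    (dy : G.dist y m + 1 = G.dist x m) (dz : G.dist z m + 1 = G.dist x m) : y = z := by
  obtain ⟨p, hp, hpl⟩ := hT.connected.exists_path_of_dist y m
  obtain ⟨q, hq, hql⟩ := hT.connected.exists_path_of_dist z m
  have aux : ∀ {y : V} (p : G.Walk y m), p.length = G.dist y m → G.dist y m + 1 = G.dist x m →
      x ∉ p.support := by
    classical
    intro y p hpl dy hx
    have h1 := SimpleGraph.dist_le (p.dropUntil x hx)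
    have h2 := p.length_dropUntil_le hx
    omega
  have e := (hT.existsUnique_path x m).unique
    (hp.cons (h := hy) (aux p hpl dy)) (hq.cons (h := hz) (aux q hql dz))
  have := congrArg SimpleGraph.Walk.snd e
  simpa using this

lemma tri (hT : G.IsTree) (u v w : V) : G.dist u w ≤ G.dist u v + G.dist v w :=
  hT.connected.dist_triangle

lemma d0 (hT : G.IsTree) {u v : V} (h : G.dist u v = 0) : u = v :=
  hT.connected.dist_eq_zero_iff.1 h

lemma dc (u v : V) : G.dist u v = G.dist v u := SimpleGraph.dist_comm

lemma d1 {u v : V} (h : G.Adj u v) : G.dist u v = 1 := SimpleGraph.dist_eq_one_iff_adj.2 h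

def Conv (G : SimpleGraph V) (A : Set V) : Prop :=
  ∀ a ∈ A, ∀ a' ∈ A, ∀ w, G.Adj a w → G.dist w a' + 1 = G.dist a a' → w ∈ A

lemma conv_dist (hT : G.IsTree) {A : Set V} (hA : Conv G A) {a w : V} (ha : a ∈ A)
    (haw : G.Adj a w) (hw : w ∉ A) {a' : V} (ha' : a' ∈ A) :
    G.dist w a' = G.dist a a' + 1 := by
  have h := t1 hT a' haw
  rw [dc a' a, dc a' w] at h
  rcases h with h | h
  · exact absurd (hA a ha a' ha' w haw h.symm) hw
  · exact h

lemma conv_insert (hT : G.IsTree) {A : Set V} (hA : Conv G A) {a w : V} (ha : a ∈ A)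
    (haw : G.Adj a w) (hw : w ∉ A) : Conv G (insert w A) := by
  have hd := fun a' (h : a' ∈ A) => conv_dist hT hA ha haw hw h
  rintro x (rfl | hx) y (rfl | hy) z hz e
  · simp at e
  · have := t3 hT hz haw.symm e (hd y hy).symm
    rw [this]; exact Or.inr ha
  · by_cases hxa : x = a
    · subst hxa
      have := d1 haw
      have : G.dist z y = 0 := by omega
      exact Or.inl (d0 hT this)
    · obtain ⟨z0, hz0, e0⟩ := t2 hT hxa
      have h0 := hA x hx a ha z0 hz0 e0
      have h1 := hd x hx
      have h2 := hd z0 h0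
      have := dc (G := G) x a
      have := dc (G := G) x y
      have := dc (G := G) z0 y
      have := dc (G := G) z0 a
      have := t3 hT hz hz0 e (by omega)
      rw [this]; exact Or.inr h0
  · exact Or.inr (hA x hx y hy z hz e)

def Good (G : SimpleGraph V) (R : Set (V × V)) : Prop :=
  (∀ p ∈ R, ∀ q ∈ R, G.dist p.1 q.1 = G.dist p.2 q.2) ∧
  Conv G {a | ∃ b, (a, b) ∈ R} ∧ Conv G {b | ∃ a, (a, b) ∈ R}

lemma Good.swap {R : Set (V × V)} (h : Good G R) : Good G (Prod.swap ⁻¹' R) := by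
  refine ⟨?_, h.2.2, h.2.1⟩
  rintro ⟨a, b⟩ hp ⟨c, d⟩ hq
  exact (h.1 (b, a) hp (d, c) hq).symm

lemma nbr_fin (hreg : ∀ v : V, (G.neighborSet v).ncard = 4) (v : V) :
    (G.neighborSet v).Finite := Set.finite_of_ncard_ne_zero (by rw [hreg]; norm_num)

lemma good_extend (hT : G.IsTree) (hreg : ∀ v : V, (G.neighborSet v).ncard = 4)
    {R : Set (V × V)} (h : Good G R) {a b w : V} (hab : (a, b) ∈ R) (haw : G.Adj a w)
    (hw : ¬ ∃ b, (w, b) ∈ R) : ∃ b', Good G (insert (w, b') R) := by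
  obtain ⟨hi, h1, h2⟩ := h
  have : ∃ b', G.Adj b b' ∧ ¬ ∃ a, (a, b') ∈ R := by
    by_contra hcon
    push Not at hcon
    choose! f hf using hcon
    have key : (G.neighborSet b).ncard ≤ (G.neighborSet a \ {w}).ncard := by
      refine Set.ncard_le_ncard_of_injOn f ?_ ?_ ((nbr_fin hreg a).diff)
      · intro y hy
        have hy' : G.Adj b y := hy
        refine ⟨?_, ?_⟩
        · have := hi _ hab _ (hf y hy')
          have e := d1 hy'
          exact SimpleGraph.dist_eq_one_iff_adj.1 (by simp at this; omega)
        · intro hyw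
          exact hw ⟨y, by rw [← (show f y = w from hyw)]; exact hf y hy'⟩
      · intro y hy z hz hyz
        have := hi _ (hf y hy) _ (hf z hz)
        simp only [hyz, SimpleGraph.dist_self] at this
        exact d0 hT this.symm
    rw [Set.ncard_diff_singleton_of_mem (show w ∈ G.neighborSet a from haw), hreg, hreg] at key
    omega
  obtain ⟨b', hbb, hb'⟩ := this
  refine ⟨b', ?_, ?_, ?_⟩
  · have c1 : ∀ p ∈ R, G.dist w p.1 = G.dist b' p.2 := by
      intro p hp
      rw [conv_dist hT h1 ⟨b, hab⟩ haw hw ⟨p.2, hp⟩,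
        conv_dist hT h2 ⟨a, hab⟩ hbb hb' ⟨p.1, hp⟩, hi _ hab _ hp]
    rintro p (rfl | hp) q (rfl | hq)
    · simp
    · exact c1 q hq
    · rw [dc, dc p.2]; exact c1 p hp
    · exact hi p hp q hq
  · have := conv_insert hT h1 ⟨b, hab⟩ haw hw
    convert this using 1
    ext x; simp [Set.mem_insert_iff, exists_or]
  · have := conv_insert hT h2 ⟨a, hab⟩ hbb hb'
    convert this using 1
    ext x; simp [Set.mem_insert_iff, exists_or]

lemma closed_univ (hT : G.IsTree) {A : Set V} {u : V} (hu : u ∈ A)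
    (h : ∀ a ∈ A, ∀ w, G.Adj a w → w ∈ A) (x : V) : x ∈ A := by
  obtain ⟨p⟩ := hT.connected u x
  induction p with
  | nil => exact hu
  | cons hadj q ih => exact ih (h _ hu _ hadj)

lemma exists_iso (hT : G.IsTree) (hreg : ∀ v : V, (G.neighborSet v).ncard = 4)
    {R0 : Set (V × V)} (h0 : Good G R0) (hne : R0.Nonempty) :
    ∃ φ : G ≃g G, ∀ p ∈ R0, φ p.1 = p.2 := by
  obtain ⟨R, hR0, hmax⟩ := zorn_subset_nonempty {R | Good G R} (by
    intro c hc hch hcn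
    have two : ∀ p ∈ ⋃₀ c, ∀ q ∈ ⋃₀ c, ∃ R ∈ c, p ∈ R ∧ q ∈ R := by
      rintro p ⟨R1, h1, hp⟩ q ⟨R2, h2, hq⟩
      rcases hch.total h1 h2 with h | h
      · exact ⟨R2, h2, h hp, hq⟩
      · exact ⟨R1, h1, hp, h hq⟩
    refine ⟨⋃₀ c, ⟨?_, ?_, ?_⟩, fun s hs => Set.subset_sUnion_of_mem hs⟩
    · intro p hp q hq
      obtain ⟨R, hR, h1, h2⟩ := two p hp q hq
      exact (hc hR).1 p h1 q h2
    · rintro a ⟨b, hab⟩ a' ⟨b', hab'⟩ w hw e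
      obtain ⟨R, hR, h1, h2⟩ := two _ hab _ hab'
      obtain ⟨y, hy⟩ := (hc hR).2.1 a ⟨b, h1⟩ a' ⟨b', h2⟩ w hw e
      exact ⟨y, R, hR, hy⟩
    · rintro a ⟨b, hab⟩ a' ⟨b', hab'⟩ w hw e
      obtain ⟨R, hR, h1, h2⟩ := two _ hab _ hab'
      obtain ⟨y, hy⟩ := (hc hR).2.2 a ⟨b, h1⟩ a' ⟨b', h2⟩ w hw e
      exact ⟨y, R, hR, hy⟩) R0 h0
  have hg : Good G R := hmax.prop
  obtain ⟨⟨u, v⟩, huv⟩ := hne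
  have huv := hR0 huv
  have hdom : ∀ x, ∃ y, (x, y) ∈ R := by
    intro x
    refine closed_univ hT (A := {x | ∃ y, (x, y) ∈ R}) ⟨v, huv⟩ ?_ x
    rintro a ⟨b, hab⟩ w haw
    by_contra hw
    obtain ⟨b', hb'⟩ := good_extend hT hreg hg hab haw hw
    exact hw ⟨b', hmax.le_of_ge hb' (Set.subset_insert _ _) (Set.mem_insert _ _)⟩
  have hran : ∀ y, ∃ x, (x, y) ∈ R := by
    intro x
    refine closed_univ hT (A := {y | ∃ x, (x, y) ∈ R}) ⟨u, huv⟩ ?_ x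
    rintro a ⟨b, hab⟩ w haw
    by_contra hw
    obtain ⟨b', hb'⟩ := good_extend hT hreg hg.swap (a := a) (b := b) hab haw hw
    have hb2 := hb'.swap
    have e : Prod.swap ⁻¹' (insert (w, b') (Prod.swap ⁻¹' R)) = insert (b', w) R := by
      ext ⟨p, q⟩; simp [and_comm]
    rw [e] at hb2
    exact hw ⟨b', hmax.le_of_ge hb2 (Set.subset_insert _ _) (Set.mem_insert _ _)⟩
  choose φ hφ using hdom
  choose ψ hψ using hran
  have hl : ∀ x y, (x, y) ∈ R → φ x = y := by
    intro x y hxy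
    have := hg.1 _ (hφ x) _ hxy
    exact d0 hT (by simpa using this.symm)
  have hl' : ∀ x y, (x, y) ∈ R → ψ y = x := by
    intro x y hxy
    have := hg.1 _ (hψ y) _ hxy
    exact d0 hT (by simpa using this)
  refine ⟨⟨⟨φ, ψ, fun x => hl' _ _ (hφ x), fun y => hl _ _ (hψ y)⟩, ?_⟩, ?_⟩
  · intro a b
    simp only [Equiv.coe_fn_mk]
    rw [← SimpleGraph.dist_eq_one_iff_adj, ← SimpleGraph.dist_eq_one_iff_adj,
      ← hg.1 _ (hφ a) _ (hφ b)]
  · intro p hp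
    exact hl p.1 p.2 (hR0 hp)

def Iv (G : SimpleGraph V) (u v : V) : Set V := {w | G.dist u w + G.dist w v = G.dist u v}

lemma iv_ex (hT : G.IsTree) (u v : V) (k : ℕ) (hk : k ≤ G.dist u v) :
    ∃ w ∈ Iv G u v, G.dist u w = k := by
  induction k with
  | zero => exact ⟨u, by simp [Iv], by simp⟩
  | succ k ih =>
    obtain ⟨w, hw, e⟩ := ih (by omega)
    simp only [Iv, Set.mem_setOf_eq] at hw
    obtain ⟨y, hy, ey⟩ := t2 hT (x := w) (m := v) (by rintro rfl; omega)
    have := t1 hT u hy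
    have := tri hT u y v
    exact ⟨y, by simp only [Iv, Set.mem_setOf_eq]; omega, by omega⟩

lemma iv_uniq (hT : G.IsTree) (u v : V) (k : ℕ) : ∀ w ∈ Iv G u v, ∀ w' ∈ Iv G u v,
    G.dist u w = k → G.dist u w' = k → w = w' := by
  induction k with
  | zero => intro w _ w' _ e e'; rw [← d0 hT e, ← d0 hT e']
  | succ k ih =>
    intro w hw w' hw' e e'
    simp only [Iv, Set.mem_setOf_eq] at hw hw'
    obtain ⟨y, hy, ey⟩ := t2 hT (x := w) (m := u) (by rintro rfl; simp at e)
    obtain ⟨y', hy', ey'⟩ := t2 hT (x := w') (m := u) (by rintro rfl; simp at e')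
    rw [dc w, dc y] at ey
    rw [dc w', dc y'] at ey'
    have a1 := t1 hT v hy
    have a2 := t1 hT v hy'
    rw [dc v, dc v] at a1 a2
    have b1 := tri hT u y v
    have b2 := tri hT u y' v
    have := ih y (by simp only [Iv, Set.mem_setOf_eq]; omega) y'
      (by simp only [Iv, Set.mem_setOf_eq]; omega) (by omega) (by omega)
    subst this
    exact t3 hT hy.symm hy'.symm (m := v) (by omega) (by omega)

lemma iv_dist (hT : G.IsTree) (u v : V) (n : ℕ) : ∀ w ∈ Iv G u v, ∀ w' ∈ Iv G u v,
    G.dist u w' = G.dist u w + n → G.dist w w' = n := by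
  induction n with
  | zero =>
    intro w hw w' hw' e
    rw [iv_uniq hT u v _ w hw w' hw' rfl e]; simp
  | succ n ih =>
    intro w hw w' hw' e
    simp only [Iv, Set.mem_setOf_eq] at hw'
    obtain ⟨y, hy, ey⟩ := t2 hT (x := w') (m := u) (by rintro rfl; simp at e)
    rw [dc w', dc y] at ey
    have a1 := t1 hT v hy
    rw [dc v, dc v] at a1
    have b1 := tri hT u y v
    have := ih w hw y (by simp only [Iv, Set.mem_setOf_eq]; omega) (by omega)
    have := t1 hT w hy
    have := tri hT u w w'
    omega

lemma iv_conv (hT : G.IsTree) (u v : V) : Conv G (Iv G u v) := by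
  intro a ha b hb w hw e
  have ha' := ha
  have hb' := hb
  simp only [Iv, Set.mem_setOf_eq] at ha' hb' ⊢
  have h1 := tri hT u a w
  have h2 := tri hT w b v
  have h3 := tri hT u b w
  have h4 := tri hT w a v
  have := d1 hw
  have := dc (G := G) a w
  have := dc (G := G) a b
  have := dc (G := G) b w
  have := tri hT u w v
  rcases le_total (G.dist u a) (G.dist u b) with h | h
  · obtain ⟨n, hn⟩ := Nat.exists_eq_add_of_le h
    have := iv_dist hT u v n a ha b hb hn
    omega
  · obtain ⟨n, hn⟩ := Nat.exists_eq_add_of_le h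
    have := iv_dist hT u v n b hb a ha hn
    omega

theorem exists_swap (hT : G.IsTree) (hreg : ∀ v : V, (G.neighborSet v).ncard = 4) (u v : V) :
    ∃ φ : G ≃g G, φ u = v ∧ φ v = u := by
  let R0 : Set (V × V) := {p | p.1 ∈ Iv G u v ∧ p.2 ∈ Iv G u v ∧ G.dist u p.1 = G.dist p.2 v}
  have hu : (u, v) ∈ R0 := by simp [R0, Iv]
  have hv : (v, u) ∈ R0 := by simp [R0, Iv]
  have e1 : {a | ∃ b, (a, b) ∈ R0} = Iv G u v := by
    ext a
    constructor
    · rintro ⟨b, h, _⟩; exact h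
    · intro h
      have h' := h
      simp only [Iv, Set.mem_setOf_eq] at h'
      obtain ⟨b, hb, e⟩ := iv_ex hT u v (G.dist a v) (by omega)
      refine ⟨b, h, hb, ?_⟩
      simp only [Iv, Set.mem_setOf_eq] at hb ⊢
      omega
  have e2 : {b | ∃ a, (a, b) ∈ R0} = Iv G u v := by
    ext a
    constructor
    · rintro ⟨b, _, h, _⟩; exact h
    · intro h
      have h' := h
      simp only [Iv, Set.mem_setOf_eq] at h'
      obtain ⟨b, hb, e⟩ := iv_ex hT u v (G.dist a v) (by omega)
      exact ⟨b, hb, h, e⟩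
  have hg : Good G R0 := by
    refine ⟨?_, by rw [e1]; exact iv_conv hT u v, by rw [e2]; exact iv_conv hT u v⟩
    rintro ⟨a, b⟩ ⟨h1, h2, h3⟩ ⟨c, d⟩ ⟨h4, h5, h6⟩
    simp only at *
    have h1' := h1
    have h2' := h2
    have h4' := h4
    have h5' := h5
    simp only [Iv, Set.mem_setOf_eq] at h1' h2' h4' h5'
    rcases le_total (G.dist u a) (G.dist u c) with h | h
    · obtain ⟨n, hn⟩ := Nat.exists_eq_add_of_le h
      rw [iv_dist hT u v n a h1 c h4 hn, dc b, iv_dist hT u v n d h5 b h2 (by omega)]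
    · obtain ⟨n, hn⟩ := Nat.exists_eq_add_of_le h
      rw [dc a, iv_dist hT u v n c h4 a h1 hn, iv_dist hT u v n b h2 d h5 (by omega)]
  obtain ⟨φ, hφ⟩ := exists_iso hT hreg hg ⟨_, hu⟩
  exact ⟨φ, hφ _ hu, hφ _ hv⟩

lemma ball_fin (hT : G.IsTree) (hreg : ∀ v : V, (G.neighborSet v).ncard = 4) (v : V) (r : ℕ) :
    {u | G.dist v u ≤ r}.Finite := by
  induction r with
  | zero =>
    refine (Set.finite_singleton v).subset ?_
    intro u hu
    exact (d0 hT (Nat.le_zero.1 hu)).symm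
  | succ r ih =>
    refine (ih.union (ih.biUnion fun w _ => nbr_fin hreg w)).subset ?_
    intro u hu
    by_cases h : G.dist v u ≤ r
    · exact Or.inl h
    · right
      have hu : G.dist v u ≤ r + 1 := hu
      obtain ⟨y, hy, e⟩ := t2 hT (x := u) (m := v) (by rintro rfl; simp at h)
      rw [dc u, dc y] at e
      exact Set.mem_biUnion (show G.dist v y ≤ r by omega) hy.symm

lemma iso_dist (hT : G.IsTree) (φ : G ≃g G) (u v : V) : G.dist (φ u) (φ v) = G.dist u v := by
  have key : ∀ (φ : G ≃g G) (u v : V), G.dist (φ u) (φ v) ≤ G.dist u v := by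
    intro φ u v
    obtain ⟨p, hp⟩ := hT.connected.exists_walk_length_eq_dist u v
    rw [← hp, ← SimpleGraph.Walk.length_map φ.toHom p]
    exact SimpleGraph.dist_le _
  apply le_antisymm (key φ u v)
  simpa using key φ.symm (φ u) (φ v)

end tree
end T4

namespace T4
section tok
variable {V : Type} {G : SimpleGraph V}

open Classical in
noncomputable def bf (G : SimpleGraph V) (v : V) (r : ℕ) : Finset V :=
  if h : {u | G.dist v u ≤ r}.Finite then h.toFinset else ∅

lemma mem_bf (hT : G.IsTree) (hreg : ∀ v : V, (G.neighborSet v).ncard = 4) {v u : V} {r : ℕ} :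
    u ∈ bf G v r ↔ G.dist v u ≤ r := by
  rw [bf, dif_pos (ball_fin hT hreg v r)]; simp

def Valid (G : SimpleGraph V) (l : V → Fin 4) : Prop :=
  ∀ u v, G.Adj u v → l v ≠ 3 → l u ≠ l v

def Imp (G : SimpleGraph V) (R : ℕ) (l : V → Fin 4) (v : V) (l' : V → Fin 4) : Prop :=
  (∀ u, R < G.dist v u → l' u = l u) ∧ Valid G l' ∧
    ((bf G v R).filter (fun u => l' u = 3)).card < ((bf G v R).filter (fun u => l u = 3)).card

def NoImp (G : SimpleGraph V) (R : ℕ) (l : V → Fin 4) : Prop := ∀ v l', ¬ Imp G R l v l'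

open Classical in
noncomputable def sh (l : V → Fin 4) (s : V → V) (D : Set V) (m : V) (c : Fin 4) : V → Fin 4 :=
  fun x => if x ∈ D then l (s x) else if x = m then c else l x

open Classical in
lemma shift_valid (hT : G.IsTree) {l : V → Fin 4} (hv : Valid G l) {m : V} {s : V → V}
    (hs : ∀ x, x ≠ m → G.Adj x (s x) ∧ G.dist (s x) m + 1 = G.dist x m) {D : Set V} {c : Fin 4}
    (h1 : ∀ x ∈ D, x ≠ m) (h2 : ∀ x ∈ D, l (s x) ≠ 3)
    (h4 : ∀ x ∈ D, ∀ y, G.Adj x y → y ∉ D → y ≠ m → l y ≠ l (s x))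
    (hc : c ≠ 3 → ∀ y, G.Adj m y → (if y ∈ D then l m else l y) ≠ c) :
    Valid G (sh l s D m c) := by
  have sm : ∀ x ∈ D, G.Adj x m → s x = m := by
    intro x hx ha
    have := hs x (h1 x hx)
    have e := d1 ha
    exact d0 hT (by omega)
  intro u v huv h3 heq
  have hmD : m ∉ D := fun h => h1 m h rfl
  unfold sh at h3 heq
  by_cases hu : u ∈ D
  · rw [if_pos hu] at heq
    by_cases hvD : v ∈ D
    · rw [if_pos hvD] at heq h3
      have hsu := hs u (h1 u hu)
      have hsv := hs v (h1 v hvD)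
      have h := t1 hT m huv
      rw [dc m, dc m] at h
      rcases h with h | h
      · have := t3 hT huv hsu.1 (m := m) (by omega) (by omega)
        rw [← this] at heq
        exact hv _ _ hsv.1 h3 heq
      · have := t3 hT huv.symm hsv.1 (m := m) (by omega) (by omega)
        rw [← this] at heq h3
        exact hv _ _ hsu.1 (h2 u hu) heq.symm
    · rw [if_neg hvD] at heq h3
      by_cases hvm : v = m
      · subst hvm
        rw [if_pos rfl] at heq h3
        have := hc h3 u huv.symm
        rw [if_pos hu] at this
        rw [sm u hu huv] at heq
        exact this heq
      · rw [if_neg hvm] at heq h3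
        exact h4 u hu v huv hvD hvm heq.symm
  · rw [if_neg hu] at heq
    by_cases hum : u = m
    · subst hum
      rw [if_pos rfl] at heq
      by_cases hvD : v ∈ D
      · rw [if_pos hvD] at heq h3
        have := hc (heq ▸ h3) v huv
        rw [if_pos hvD] at this
        rw [sm v hvD huv.symm] at heq
        exact this heq.symm
      · have hvu : v ≠ u := huv.ne'
        rw [if_neg hvD, if_neg hvu] at heq h3
        have := hc (heq ▸ h3) v huv
        rw [if_neg hvD] at this
        exact this heq.symm
    · rw [if_neg hum] at heq
      by_cases hvD : v ∈ D
      · rw [if_pos hvD] at heq h3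
        exact h4 v hvD u huv.symm hu hum heq
      · rw [if_neg hvD] at heq h3
        by_cases hvm : v = m
        · subst hvm
          rw [if_pos rfl] at heq h3
          have := hc h3 u huv.symm
          rw [if_neg hu] at this
          exact this heq
        · rw [if_neg hvm] at heq h3
          exact hv u v huv h3 heq

def Tok (G : SimpleGraph V) (l : V → Fin 4) (v m : V) : Prop :=
  l v = 3 ∧ ∀ x z, G.dist v x + G.dist x m = G.dist v m → G.Adj x z →
    G.dist z m + 1 = G.dist x m →
    (l z ≠ 3 ∧ ∀ y, G.Adj x y → y ≠ z → G.dist v x < G.dist v y → l y ≠ l z)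

lemma tok_self {l : V → Fin 4} {v : V} (h : l v = 3) : Tok G l v v := by
  refine ⟨h, fun x z h1 _ h2 => ?_⟩
  have := dc (G := G) v x
  simp only [SimpleGraph.dist_self] at h1
  omega

lemma tok_prefix (hT : G.IsTree) {l : V → Fin 4} {v m m' : V} (h : Tok G l v m)
    (hb : G.dist v m' + G.dist m' m = G.dist v m) : Tok G l v m' := by
  refine ⟨h.1, fun x z h1 h2 h3 => ?_⟩
  have a1 := tri hT v x m
  have a2 := tri hT x m' m
  have a3 := tri hT z m' m
  have a4 := tri hT x z m
  have := d1 h2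
  exact h.2 x z (by omega) h2 (by omega)

lemma tok_end (hT : G.IsTree) {l : V → Fin 4} {v m : V} (h : Tok G l v m) (hne : v ≠ m) :
    l m ≠ 3 := by
  obtain ⟨x, hx, e⟩ := t2 hT hne.symm
  rw [dc m, dc x] at e
  have := d1 hx
  have := dc (G := G) x m
  refine (h.2 x m (by omega) hx.symm ?_).1
  simp; omega

/-- half-open segment from `v` to `m` -/
def Seg (G : SimpleGraph V) (v m : V) : Set V :=
  {x | G.dist v x + G.dist x m = G.dist v m ∧ x ≠ m}

lemma seg_h4 (hT : G.IsTree) {l : V → Fin 4} {v m : V} (h : Tok G l v m)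
    {s : V → V} (hs : ∀ x, x ≠ m → G.Adj x (s x) ∧ G.dist (s x) m + 1 = G.dist x m)
    {x : V} (hx : x ∈ Seg G v m) :
    l (s x) ≠ 3 ∧ ∀ y, G.Adj x y → y ∉ Seg G v m → y ≠ m → l y ≠ l (s x) := by
  obtain ⟨hb, hne⟩ := hx
  obtain ⟨sa, sd⟩ := hs x hne
  obtain ⟨g1, g2⟩ := h.2 x (s x) hb sa sd
  refine ⟨g1, fun y hy hyS hym => g2 y hy ?_ ?_⟩
  · rintro rfl
    refine hyS ⟨?_, hym⟩
    have := tri hT v x (s x)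
    have := tri hT v (s x) m
    have := d1 sa
    omega
  · by_contra hlt
    refine hyS ⟨?_, hym⟩
    have a1 := t1 hT v hy
    have a2 := t1 hT m hy
    rw [dc m, dc m] at a2
    have := tri hT v y m
    omega

lemma count4 {N : Finset V} (hN : N.card = 4) (h : V → Fin 4)
    (hsurj : ∀ c : Fin 4, c ≠ 3 → ∃ y ∈ N, h y = c) (d : Fin 4) (hd : d ≠ 3) :
    ∃ c : Fin 4, c ≠ 3 ∧ c ≠ d ∧ ∃ w ∈ N, h w = c ∧ ∀ y ∈ N, h y = c → y = w := by
  by_contra hcon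
  push Not at hcon
  have two : ∀ c : Fin 4, c ≠ 3 → c ≠ d → 2 ≤ (N.filter (fun y => h y = c)).card := by
    intro c h3 hcd
    obtain ⟨w, hw, e⟩ := hsurj c h3
    obtain ⟨y, hy, e', hne⟩ := hcon c h3 hcd w hw e
    exact Finset.one_lt_card.2 ⟨w, by simp [hw, e], y, by simp [hy, e'], hne.symm⟩
  have one : ∀ c : Fin 4, c ≠ 3 → 1 ≤ (N.filter (fun y => h y = c)).card := by
    intro c h3
    obtain ⟨w, hw, e⟩ := hsurj c h3
    exact Finset.card_pos.2 ⟨w, by simp [hw, e]⟩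
  have sum := Finset.card_eq_sum_card_fiberwise (f := h) (s := N) (t := Finset.univ) (by simp)
  rw [Fin.sum_univ_four, hN] at sum
  have a0 := one 0 (by decide)
  have a1 := one 1 (by decide)
  have a2 := one 2 (by decide)
  fin_cases d
  · have := two 1 (by decide) (by decide)
    have := two 2 (by decide) (by decide)
    omega
  · have := two 0 (by decide) (by decide)
    have := two 2 (by decide) (by decide)
    omega
  · have := two 0 (by decide) (by decide)
    have := two 1 (by decide) (by decide)
    omega
  · exact hd rfl

lemma ex_next (hT : G.IsTree) (m : V) :
    ∃ s : V → V, ∀ x, x ≠ m → G.Adj x (s x) ∧ G.dist (s x) m + 1 = G.dist x m := by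
  have : ∀ x, ∃ y, x ≠ m → G.Adj x y ∧ G.dist y m + 1 = G.dist x m := by
    intro x
    by_cases h : x = m
    · exact ⟨x, fun h' => absurd h h'⟩
    · obtain ⟨y, hy⟩ := t2 hT h
      exact ⟨y, fun _ => hy⟩
  choose s hs using this
  exact ⟨s, hs⟩

lemma tok_extend (hT : G.IsTree) (hreg : ∀ v : V, (G.neighborSet v).ncard = 4)
    {l : V → Fin 4} (hv : Valid G l) {R : ℕ} (hno : NoImp G R l) {v m : V}
    (h : Tok G l v m) (hR : G.dist v m ≤ R) :
    ∃ w, Tok G l v w ∧ G.dist v w = G.dist v m + 1 := by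
  classical
  obtain ⟨s, hs⟩ := ex_next hT m
  set D := Seg G v m with hD
  have hsurj : ∀ c : Fin 4, c ≠ 3 → ∃ y, G.Adj m y ∧ (if y ∈ D then l m else l y) = c := by
    intro c hc
    by_contra hcon
    push Not at hcon
    apply hno v (sh l s D m c)
    refine ⟨?_, ?_, ?_⟩
    · intro u hu
      have h1 : u ∉ D := by
        rintro ⟨hb, _⟩
        omega
      have h2 : u ≠ m := by rintro rfl; omega
      simp [sh, h1, h2]
    · exact shift_valid hT hv hs (fun x hx => hx.2) (fun x hx => (seg_h4 hT h hs hx).1)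
        (fun x hx => (seg_h4 hT h hs hx).2) (fun _ => hcon)
    · apply Finset.card_lt_card
      rw [Finset.ssubset_iff_of_subset]
      · refine ⟨v, by simp [mem_bf hT hreg, h.1], ?_⟩
        simp only [Finset.mem_filter, not_and]
        intro _
        by_cases hvm : v = m
        · have : v ∉ D := fun hh => hh.2 hvm
          simp only [sh, this, if_false, hvm, if_true]
          rw [hvm] at this
          simpa [this] using hc
        · have : v ∈ D := ⟨by simp, hvm⟩
          simp only [sh, this, if_true]
          exact (seg_h4 hT h hs this).1
      · intro x hx
        simp only [Finset.mem_filter] at hx ⊢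
        refine ⟨hx.1, ?_⟩
        have h3 := hx.2
        unfold sh at h3
        split_ifs at h3 with g1 g2
        · exact absurd h3 (seg_h4 hT h hs g1).1
        · exact absurd h3 hc
        · exact h3
  let N := (nbr_fin hreg m).toFinset
  have hN : N.card = 4 := by rw [← Set.ncard_eq_toFinset_card _ (nbr_fin hreg m), hreg]
  have mN : ∀ y, y ∈ N ↔ G.Adj m y := by intro y; simp [N]
  obtain ⟨c, hc3, hcd, w, hw, hwc, huniq⟩ := count4 hN (fun y => if y ∈ D then l m else l y)
    (fun c hc => by obtain ⟨y, hy, e⟩ := hsurj c hc; exact ⟨y, (mN y).2 hy, e⟩)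
    (if v = m then 0 else l m) (by
      split_ifs with e
      · decide
      · exact tok_end hT h e)
  rw [mN] at hw
  simp only [mN] at huniq
  have hwD : w ∉ D := by
    intro hh
    have hne : v ≠ m := by
      rintro rfl
      have := hh.1
      simp only [SimpleGraph.dist_self] at this
      exact hh.2 (d0 hT (by omega : G.dist v w = 0)).symm
    simp only [hh, if_true] at hwc
    rw [if_neg hne] at hcd
    exact hcd hwc.symm
  simp only [hwD, if_false] at hwc
  have hdw : G.dist v w = G.dist v m + 1 := by
    rcases t1 hT v hw with e | e
    · refine absurd ⟨?_, hw.ne'⟩ hwD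
      have := d1 hw
      have := dc (G := G) m w
      omega
    · exact e
  refine ⟨w, ⟨h.1, ?_⟩, hdw⟩
  intro x z hb hxz hz
  have hxw : x ≠ w := by rintro rfl; simp at hz
  have hxm : G.dist x w = G.dist x m + 1 := by
    obtain ⟨x', hx', e'⟩ := t2 hT hxw.symm
    have a1 := tri hT v x x'
    have a2 := dc (G := G) x x'
    have a3 := dc (G := G) x w
    have a4 := t1 hT v hx'
    have : x' = m := t3 hT hx' hw.symm (m := v) (by rw [dc x', dc w]; omega)
      (by rw [dc m, dc w]; omega)
    subst this
    omega
  have hbm : G.dist v x + G.dist x m = G.dist v m := by omega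
  by_cases hx : x = m
  · subst hx
    have : G.dist z w = 0 := by simp at hxm; omega
    have := d0 hT this
    subst this
    rw [hwc]
    refine ⟨hc3, fun y hy hyz hlt hyc => hyz (huniq y hy ?_)⟩
    have : y ∉ D := by
      rintro ⟨hh, _⟩
      omega
    simp [this, hyc]
  · obtain ⟨sa, sd⟩ := hs x hx
    have := tri hT (s x) m w
    have := d1 hw
    have := tri hT x (s x) w
    have := d1 sa
    have e : s x = z := t3 hT sa hxz (m := w) (by omega) hz
    subst e
    exact h.2 x (s x) hbm sa sd

lemma tok_disjoint (hT : G.IsTree) (hreg : ∀ v : V, (G.neighborSet v).ncard = 4)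
    {l : V → Fin 4} (hv : Valid G l) {K R : ℕ} (hno : NoImp G R l) (hR : 2 * K ≤ R) {v v' w : V}
    (h : Tok G l v w) (h' : Tok G l v' w) (hd : G.dist v w ≤ K) (hd' : G.dist v' w ≤ K) :
    v = v' := by
  classical
  by_contra hne
  let P : ℕ → Prop := fun n => ∃ m, Tok G l v m ∧ Tok G l v' m ∧ G.dist v m ≤ K ∧
    G.dist v' m ≤ K ∧ G.dist v m = n
  have hP : ∃ n, P n := ⟨_, w, h, h', hd, hd', rfl⟩
  obtain ⟨m, tm, tm', dm, dm', en⟩ := Nat.find_spec hP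
  have hmin : ∀ x ∈ Seg G v m, x ∉ Seg G v' m := by
    rintro x ⟨hb, hx⟩ ⟨hb', _⟩
    have hpos := hT.connected.pos_dist_of_ne hx
    exact Nat.find_min hP (m := G.dist v x) (by omega)
      ⟨x, tok_prefix hT tm hb, tok_prefix hT tm' hb', by omega, by omega, rfl⟩
  have hvm : v ≠ m := by
    rintro rfl
    exact tok_end hT tm' (Ne.symm hne) tm.1
  have hvm' : v' ≠ m := by
    rintro rfl
    exact tok_end hT tm hne tm'.1
  obtain ⟨s, hs⟩ := ex_next hT m
  set D := Seg G v m ∪ Seg G v' m with hD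
  have g : ∀ x ∈ D, l (s x) ≠ 3 ∧ ∀ y, G.Adj x y → y ∉ D → y ≠ m → l y ≠ l (s x) := by
    rintro x (hx | hx)
    · exact ⟨(seg_h4 hT tm hs hx).1, fun y hy hyD =>
        (seg_h4 hT tm hs hx).2 y hy (fun hh => hyD (Or.inl hh))⟩
    · exact ⟨(seg_h4 hT tm' hs hx).1, fun y hy hyD =>
        (seg_h4 hT tm' hs hx).2 y hy (fun hh => hyD (Or.inr hh))⟩
  have hDm : ∀ x ∈ D, x ≠ m := by
    rintro x (hx | hx)
    · exact hx.2
    · exact hx.2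
  have hmD : m ∉ D := fun h => hDm m h rfl
  have hvD : v ∈ D := Or.inl ⟨by simp, hvm⟩
  have hvD' : v' ∈ D := Or.inr ⟨by simp, hvm'⟩
  have hvv : G.dist v v' ≤ R := by
    have := tri hT v m v'
    have := dc (G := G) m v'
    omega
  apply hno v (sh l s D m 3)
  refine ⟨?_, ?_, ?_⟩
  · intro u hu
    have h1 : u ∉ D := by
      rintro (⟨hb, _⟩ | ⟨hb, _⟩)
      · omega
      · have := tri hT v m u
        have := dc (G := G) m u
        omega
    have h2 : u ≠ m := by rintro rfl; omega
    simp [sh, h1, h2]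
  · exact shift_valid hT hv hs hDm (fun x hx => (g x hx).1)
        (fun x hx => (g x hx).2) (fun h => absurd rfl h)
  · set F := (bf G v R).filter (fun u => l u = 3) with hF
    have m1 : v ∈ F := by simp [F, mem_bf hT hreg, tm.1]
    have m2 : v' ∈ F := by simp [F, mem_bf hT hreg, tm'.1, hvv]
    have sub : (bf G v R).filter (fun u => sh l s D m 3 u = 3) ⊆
        insert m ((F.erase v).erase v') := by
      intro x hx
      simp only [Finset.mem_filter, Finset.mem_insert, Finset.mem_erase, F] at hx ⊢
      by_cases hxm : x = m
      · exact Or.inl hxm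
      · right
        obtain ⟨hx1, h3⟩ := hx
        have hxD : x ∉ D := by
          intro hh
          simp only [sh, hh, if_true] at h3
          exact (g x hh).1 h3
        simp only [sh, hxD, hxm, if_false] at h3
        exact ⟨fun e => hxD (e ▸ hvD'), fun e => hxD (e ▸ hvD), hx1, h3⟩
    have c1 := Finset.card_le_card sub
    have c2 := Finset.card_insert_le m ((F.erase v).erase v')
    have c3 : ((F.erase v).erase v').card + 1 = (F.erase v).card :=
      Finset.card_erase_add_one (Finset.mem_erase.2 ⟨Ne.symm hne, m2⟩)
    have c4 := Finset.card_erase_add_one m1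
    omega

lemma tok_many (hT : G.IsTree) (hreg : ∀ v : V, (G.neighborSet v).ncard = 4)
    {l : V → Fin 4} (hv : Valid G l) {K R : ℕ} (hno : NoImp G R l) (hR : 2 * K ≤ R) {v : V}
    (h : l v = 3) [DecidablePred fun w => Tok G l v w] :
    K + 1 ≤ ((bf G v K).filter (fun w => Tok G l v w)).card := by
  have ex : ∀ k, k ≤ K → ∃ w, Tok G l v w ∧ G.dist v w = k := by
    intro k
    induction k with
    | zero => intro _; exact ⟨v, tok_self h, by simp⟩
    | succ k ih =>
      intro hk
      obtain ⟨m, hm, e⟩ := ih (by omega)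
      obtain ⟨w, hw, e'⟩ := tok_extend hT hreg hv hno hm (by omega)
      exact ⟨w, hw, by omega⟩
  have : Finset.range (K + 1) ⊆
      ((bf G v K).filter (fun w => Tok G l v w)).image (fun w => G.dist v w) := by
    intro k hk
    obtain ⟨w, hw, e⟩ := ex k (by simp at hk; omega)
    simp only [Finset.mem_image, Finset.mem_filter, mem_bf hT hreg]
    exact ⟨w, ⟨by simp at hk; omega, hw⟩, e⟩
  have := Finset.card_le_card this
  rw [Finset.card_range] at this
  exact this.trans Finset.card_image_le

end tok
end T4

namespace T4
open Filter
section step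
variable {V : Type} {G : SimpleGraph V}

abbrev Rule := ℕ × ℤ × (ℤ →₀ Fin 4)

noncomputable def lab (n : ℕ) (x : V → ℝ) (u : V) : ℤ := ⌊(n : ℝ) * x u⌋

noncomputable def pt (G : SimpleGraph V) (R : ℕ) (q : Rule) (x : V → ℝ) (l : V → Fin 4) (v : V) :
    V → Fin 4 := fun u => if G.dist v u ≤ R then q.2.2 (lab q.1 x u) else l u

def Cen (G : SimpleGraph V) (R : ℕ) (q : Rule) (x : V → ℝ) (l : V → Fin 4) (v : V) : Prop :=
  lab q.1 x v = q.2.1 ∧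
  (∀ u w, G.dist v u ≤ 2 * R + 1 → G.dist v w ≤ 2 * R + 1 → lab q.1 x u = lab q.1 x w → u = w) ∧
  Valid G (pt G R q x l v) ∧
  ((bf G v R).filter (fun u => pt G R q x l v u = 3)).card <
    ((bf G v R).filter (fun u => l u = 3)).card

open Classical in
noncomputable def Step (G : SimpleGraph V) (R : ℕ) (q : Rule) (x : V → ℝ) (l : V → Fin 4) :
    V → Fin 4 :=
  fun u => if ∃ v, Cen G R q x l v ∧ G.dist v u ≤ R then q.2.2 (lab q.1 x u) else l u

lemma cen_unique {R : ℕ} {q : Rule} {x : V → ℝ} {l : V → Fin 4} {v v' : V}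
    (h : Cen G R q x l v) (h' : Cen G R q x l v') (hd : G.dist v v' ≤ 2 * R + 1) : v = v' :=
  h.2.1 v v' (by simp) hd (h.1.trans h'.1.symm)

lemma step_eq (hT : G.IsTree) {R : ℕ} {q : Rule} {x : V → ℝ} {l : V → Fin 4} {v : V}
    (h : Cen G R q x l v) {u : V} (hu : G.dist v u ≤ R + 1) :
    Step G R q x l u = pt G R q x l v u := by
  unfold Step pt
  by_cases h1 : G.dist v u ≤ R
  · rw [if_pos h1, if_pos ⟨v, h, h1⟩]
  · rw [if_neg h1, if_neg]
    rintro ⟨v', h', hd⟩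
    have := tri hT v u v'
    have := dc (G := G) u v'
    have := cen_unique h h' (by omega)
    subst this
    exact h1 hd

lemma step_neg {R : ℕ} {q : Rule} {x : V → ℝ} {l : V → Fin 4} {u : V}
    (h : ∀ v, G.dist v u ≤ R → ¬ Cen G R q x l v) : Step G R q x l u = l u := by
  unfold Step
  rw [if_neg]
  rintro ⟨v, hv, hd⟩
  exact h v hd hv

lemma step_valid (hT : G.IsTree) {R : ℕ} {q : Rule} {x : V → ℝ} {l : V → Fin 4}
    (hl : Valid G l) : Valid G (Step G R q x l) := by
  intro a b hab h3
  by_cases h : ∃ v, Cen G R q x l v ∧ (G.dist v a ≤ R ∨ G.dist v b ≤ R)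
  · obtain ⟨v, hv, hd⟩ := h
    have h1 := tri hT v a b
    have h2 := tri hT v b a
    have := d1 hab
    have := d1 hab.symm
    rw [step_eq hT hv (by omega)] at h3 ⊢
    rw [step_eq hT hv (by omega)]
    exact hv.2.2.1 a b hab h3
  · push Not at h
    have ea : Step G R q x l a = l a := step_neg fun v hd hv => by have := (h v hv).1; omega
    have eb : Step G R q x l b = l b := step_neg fun v hd hv => by have := (h v hv).2; omega
    rw [eb] at h3 ⊢
    rw [ea]
    exact hl a b hab h3

/-! equivariance -/

lemma valid_comp (ψ : G ≃g G) (l : V → Fin 4) : Valid G (fun u => l (ψ u)) ↔ Valid G l := by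
  constructor
  · intro h u v huv h3
    have := h (ψ.symm u) (ψ.symm v) (ψ.symm.map_adj_iff.2 huv)
    simp only [RelIso.apply_symm_apply] at this
    exact this h3
  · intro h u v huv
    exact h _ _ (ψ.map_adj_iff.2 huv)

lemma pt_comp (hT : G.IsTree) (ψ : G ≃g G) (R : ℕ) (q : Rule) (x : V → ℝ) (l : V → Fin 4) (v : V) :
    pt G R q (fun u => x (ψ u)) (fun u => l (ψ u)) v = fun u => pt G R q x l (ψ v) (ψ u) := by
  funext u
  simp only [pt, lab, iso_dist hT]

lemma card_comp (hT : G.IsTree) (hreg : ∀ v : V, (G.neighborSet v).ncard = 4)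
    (ψ : G ≃g G) (R : ℕ) (l : V → Fin 4) (v : V) :
    ((bf G v R).filter (fun u => l (ψ u) = 3)).card =
      ((bf G (ψ v) R).filter (fun u => l u = 3)).card := by
  refine Finset.card_bij (fun u _ => ψ u) ?_ ?_ ?_
  · intro u hu
    simpa [mem_bf hT hreg, iso_dist hT] using hu
  · intro a _ b _ h
    exact ψ.injective h
  · intro b hb
    refine ⟨ψ.symm b, ?_, by simp⟩
    have := iso_dist hT ψ v (ψ.symm b)
    simp only [RelIso.apply_symm_apply] at this
    simpa [mem_bf hT hreg, ← this] using hb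

lemma cen_comp (hT : G.IsTree) (hreg : ∀ v : V, (G.neighborSet v).ncard = 4)
    (ψ : G ≃g G) (R : ℕ) (q : Rule) (x : V → ℝ) (l : V → Fin 4) (v : V) :
    Cen G R q (fun u => x (ψ u)) (fun u => l (ψ u)) v ↔ Cen G R q x l (ψ v) := by
  unfold Cen
  rw [pt_comp hT, valid_comp ψ (pt G R q x l (ψ v)),
    card_comp hT hreg ψ R (pt G R q x l (ψ v)), card_comp hT hreg ψ R l]
  refine and_congr Iff.rfl (and_congr ?_ Iff.rfl)
  constructor
  · intro h u w hu hw e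
    have := h (ψ.symm u) (ψ.symm w)
      (by rw [← iso_dist hT ψ]; simpa using hu) (by rw [← iso_dist hT ψ]; simpa using hw)
      (by simpa [lab] using e)
    simpa using this
  · intro h u w hu hw e
    exact ψ.injective (h _ _ (by rwa [iso_dist hT]) (by rwa [iso_dist hT]) e)

lemma step_comp (hT : G.IsTree) (hreg : ∀ v : V, (G.neighborSet v).ncard = 4)
    (ψ : G ≃g G) (R : ℕ) (q : Rule) (x : V → ℝ) (l : V → Fin 4) :
    Step G R q (fun u => x (ψ u)) (fun u => l (ψ u)) = fun u => Step G R q x l (ψ u) := by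
  funext u
  have : (∃ v, Cen G R q (fun u => x (ψ u)) (fun u => l (ψ u)) v ∧ G.dist v u ≤ R) ↔
      ∃ v, Cen G R q x l v ∧ G.dist v (ψ u) ≤ R := by
    simp only [cen_comp hT hreg]
    constructor
    · rintro ⟨v, h1, h2⟩
      exact ⟨ψ v, h1, by rwa [iso_dist hT]⟩
    · rintro ⟨v, h1, h2⟩
      refine ⟨ψ.symm v, by simpa using h1, ?_⟩
      rw [← iso_dist hT ψ]; simpa using h2
  classical
  unfold Step
  simp only [lab]
  exact if_congr this rfl rfl

noncomputable def F (G : SimpleGraph V) (R : ℕ) (q : ℕ → Rule) (x : V → ℝ) : ℕ → V → Fin 4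
  | 0 => fun _ => 3
  | i + 1 => Step G R (q i) x (F G R q x i)

lemma F_valid (hT : G.IsTree) (R : ℕ) (q : ℕ → Rule) (x : V → ℝ) (i : ℕ) :
    Valid G (F G R q x i) := by
  induction i with
  | zero => intro u v _ h; exact absurd rfl h
  | succ i ih => exact step_valid hT ih

lemma F_comp (hT : G.IsTree) (hreg : ∀ v : V, (G.neighborSet v).ncard = 4)
    (ψ : G ≃g G) (R : ℕ) (q : ℕ → Rule) (x : V → ℝ) (i : ℕ) :
    F G R q (fun u => x (ψ u)) i = fun u => F G R q x i (ψ u) := by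
  induction i with
  | zero => rfl
  | succ i ih =>
    simp only [F, ih]
    exact step_comp hT hreg ψ R (q i) x _

open Classical in
noncomputable def Lim (G : SimpleGraph V) (R : ℕ) (q : ℕ → Rule) (x : V → ℝ) (u : V) : Fin 4 :=
  if ∀ᶠ i in atTop, F G R q x i u = 0 then 0 else
  if ∀ᶠ i in atTop, F G R q x i u = 1 then 1 else
  if ∀ᶠ i in atTop, F G R q x i u = 2 then 2 else 3

lemma Lim_comp (hT : G.IsTree) (hreg : ∀ v : V, (G.neighborSet v).ncard = 4)
    (ψ : G ≃g G) (R : ℕ) (q : ℕ → Rule) (x : V → ℝ) :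
    Lim G R q (fun u => x (ψ u)) = fun u => Lim G R q x (ψ u) := by
  funext u
  classical
  unfold Lim
  exact if_congr (by simp only [F_comp hT hreg]) rfl (if_congr (by simp only [F_comp hT hreg]) rfl
    (if_congr (by simp only [F_comp hT hreg]) rfl rfl))

lemma Lim_eq {R : ℕ} {q : ℕ → Rule} {x : V → ℝ} {u : V} {c : Fin 4}
    (h : ∀ᶠ i in atTop, F G R q x i u = c) : Lim G R q x u = c := by
  have key : ∀ d : Fin 4, (∀ᶠ i in atTop, F G R q x i u = d) ↔ d = c := by
    intro d
    constructor
    · intro h'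
      obtain ⟨i, h1, h2⟩ := (h.and h').exists
      exact h2.symm.trans h1
    · rintro rfl; exact h
  simp only [Lim, key]
  fin_cases c <;> simp

lemma lab_inj {x : V → ℝ} (hx : Function.Injective x) (S : Finset V) :
    ∃ n : ℕ, ∀ u ∈ S, ∀ w ∈ S, lab n x u = lab n x w → u = w := by
  have : ∀ᶠ n : ℕ in atTop, ∀ u ∈ S, ∀ w ∈ S, lab n x u = lab n x w → u = w := by
    rw [Filter.eventually_all_finset]
    intro u _
    rw [Filter.eventually_all_finset]
    intro w _
    by_cases huw : u = w
    · exact Eventually.of_forall fun _ _ => huw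
    · have hpos : 0 < |x u - x w| := abs_pos.2 (sub_ne_zero.2 (fun h => huw (hx h)))
      filter_upwards [eventually_ge_atTop ⌈1 / |x u - x w|⌉₊] with n hn e
      exfalso
      have h1 := Int.abs_sub_lt_one_of_floor_eq_floor e
      rw [← mul_sub, abs_mul, Nat.abs_cast] at h1
      have h2 := Nat.ceil_le.1 hn
      rw [div_le_iff₀ hpos] at h2
      linarith
  exact this.exists

lemma ex_rule {x : V → ℝ} {n : ℕ} (S : Finset V)
    (h : ∀ u ∈ S, ∀ w ∈ S, lab n x u = lab n x w → u = w) (l : V → Fin 4) :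
    ∃ g : ℤ →₀ Fin 4, ∀ u ∈ S, g (lab n x u) = l u := by
  classical
  rcases isEmpty_or_nonempty V with hV | hV
  · exact ⟨0, fun u => (hV.false u).elim⟩
  refine ⟨Finsupp.onFinset (S.image (lab n x)) (fun k => if k ∈ S.image (lab n x) then
    l (Function.invFunOn (lab n x) S k) else 0) ?_, ?_⟩
  · intro k hk
    by_contra hcon
    simp only [hcon, if_false] at hk
    exact hk rfl
  · intro u hu
    have hi : Set.InjOn (lab n x) (S : Set V) := fun a ha b hb e => h a ha b hb e
    have e := hi.leftInvOn_invFunOn (show u ∈ (S : Set V) from hu)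
    simp only [Finsupp.onFinset_apply, Finset.mem_image_of_mem _ hu, if_true]
    rw [e]

lemma lim_good (hT : G.IsTree) (hreg : ∀ v : V, (G.neighborSet v).ncard = 4)
    {R : ℕ} {q : ℕ → Rule} (hq : ∀ r, ∃ᶠ i in atTop, q i = r) {x : V → ℝ}
    (hx : Function.Injective x)
    (hc : ∀ v, ∀ᶠ i in atTop, ¬ Cen G R (q i) x (F G R q x i) v) :
    Valid G (Lim G R q x) ∧ NoImp G R (Lim G R q x) := by
  have hconv : ∀ u, ∀ᶠ i in atTop, F G R q x i u = Lim G R q x u := by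
    intro u
    have h1 : ∀ᶠ i in atTop, ∀ v ∈ bf G u R, ¬ Cen G R (q i) x (F G R q x i) v := by
      rw [Filter.eventually_all_finset]
      exact fun v _ => hc v
    obtain ⟨N, hN⟩ := eventually_atTop.1 h1
    have h2 : ∀ i, N ≤ i → F G R q x i u = F G R q x N u := by
      intro i hi
      induction i, hi using Nat.le_induction with
      | base => rfl
      | succ i hi ih =>
        rw [← ih]
        exact step_neg fun v hd => hN i hi v ((mem_bf hT hreg).2 (by rwa [dc]))
    have h3 : ∀ᶠ i in atTop, F G R q x i u = F G R q x N u := eventually_atTop.2 ⟨N, h2⟩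
    rw [Lim_eq h3]
    exact h3
  set l := Lim G R q x with hl
  refine ⟨?_, ?_⟩
  · intro u v huv h3
    obtain ⟨i, h1, h2⟩ := ((hconv u).and (hconv v)).exists
    rw [← h1, ← h2]
    exact F_valid hT R q x i u v huv (by rwa [h2])
  · rintro v l' ⟨i1, i2, i3⟩
    obtain ⟨n, hn⟩ := lab_inj hx (bf G v (2 * R + 1))
    obtain ⟨g, hg⟩ := ex_rule (x := x) (n := n) (bf G v R) (fun u hu w hw => hn u
      (by rw [mem_bf hT hreg] at hu ⊢; omega) w (by rw [mem_bf hT hreg] at hw ⊢; omega)) l'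
    have h1 : ∀ᶠ i in atTop, ∀ u ∈ bf G v (R + 1), F G R q x i u = l u := by
      rw [Filter.eventually_all_finset]
      exact fun u _ => hconv u
    obtain ⟨i, hi, h2, h3⟩ := ((hq (n, lab n x v, g)).and_eventually (h1.and (hc v))).exists
    apply h3
    rw [hi]
    have hpt : ∀ u, G.dist v u ≤ R + 1 →
        pt G R (n, lab n x v, g) x (F G R q x i) v u = l' u := by
      intro u hu
      unfold pt
      split_ifs with h
      · exact hg u ((mem_bf hT hreg).2 h)
      · rw [h2 u ((mem_bf hT hreg).2 hu)]
        exact (i1 u (by omega)).symm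
    have hpt2 : ∀ u, R < G.dist v u →
        pt G R (n, lab n x v, g) x (F G R q x i) v u = F G R q x i u := by
      intro u hu
      unfold pt
      rw [if_neg (by omega)]
    refine ⟨rfl, ?_, ?_, ?_⟩
    · intro u w hu hw
      exact hn u ((mem_bf hT hreg).2 hu) w ((mem_bf hT hreg).2 hw)
    · intro a b hab h3
      have t1 := tri hT v a b
      have t2 := tri hT v b a
      have := d1 hab
      have := d1 hab.symm
      by_cases hh : G.dist v a ≤ R + 1 ∧ G.dist v b ≤ R + 1
      · rw [hpt b hh.2] at h3 ⊢
        rw [hpt a hh.1]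
        exact i2 a b hab h3
      · rw [hpt2 b (by omega)] at h3 ⊢
        rw [hpt2 a (by omega)]
        exact F_valid hT R q x i a b hab h3
    · have e1 : (bf G v R).filter (fun u => pt G R (n, lab n x v, g) x (F G R q x i) v u = 3)
          = (bf G v R).filter (fun u => l' u = 3) := by
        refine Finset.filter_congr fun u hu => ?_
        rw [mem_bf hT hreg] at hu
        rw [hpt u (by omega)]
      have e2 : (bf G v R).filter (fun u => F G R q x i u = 3)
          = (bf G v R).filter (fun u => l u = 3) := by
        refine Finset.filter_congr fun u hu => ?_
        rw [mem_bf hT hreg] at hu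
        rw [h2 u ((mem_bf hT hreg).2 (by omega))]
      rw [e1, e2]
      exact i3

/-! measurability -/

lemma meas_lab (n : ℕ) (u : V) : Measurable (fun x : V → ℝ => lab n x u) :=
  (measurable_const.mul (measurable_pi_apply u)).floor

lemma meas_pt {R : ℕ} {q : Rule} {f : (V → ℝ) → V → Fin 4} (hf : Measurable f) (v u : V) :
    Measurable (fun x => pt G R q x (f x) v u) := by
  unfold pt
  by_cases h : G.dist v u ≤ R
  · simp only [h, if_true]
    exact (measurable_from_top (f := fun k : ℤ => q.2.2 k)).comp (meas_lab _ _)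
  · simp only [h, if_false]
    exact (measurable_pi_apply u).comp hf

lemma meas_card (S : Finset V) {f : (V → ℝ) → V → Fin 4} (hf : ∀ u, Measurable fun x => f x u) :
    Measurable (fun x => (S.filter (fun u => f x u = 3)).card) := by
  simp only [Finset.card_filter]
  refine Finset.measurable_sum _ fun u _ => ?_
  exact Measurable.ite ((hf u) (measurableSet_singleton 3)) measurable_const measurable_const

lemma meas_valid [Countable V] {f : (V → ℝ) → V → Fin 4} (hf : ∀ u, Measurable fun x => f x u) :
    MeasurableSet {x | Valid G (f x)} := by
  unfold Valid
  simp only [Set.setOf_forall]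
  refine MeasurableSet.iInter fun u => MeasurableSet.iInter fun v => MeasurableSet.iInter fun _ => ?_
  have : {x | f x v ≠ 3 → f x u ≠ f x v} = {x | f x v = 3} ∪ {x | f x u = f x v}ᶜ := by
    ext x; simp; tauto
  rw [this]
  exact ((hf v) (measurableSet_singleton 3)).union (measurableSet_eq_fun (hf u) (hf v)).compl

lemma meas_cen [Countable V] {R : ℕ} {q : Rule} {f : (V → ℝ) → V → Fin 4} (hf : Measurable f)
    (v : V) : MeasurableSet {x | Cen G R q x (f x) v} := by
  unfold Cen
  simp only [Set.setOf_and]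
  refine ((meas_lab _ v) (measurableSet_singleton _)).inter (MeasurableSet.inter ?_
    (MeasurableSet.inter (meas_valid fun u => meas_pt hf v u) ?_))
  · simp only [Set.setOf_forall]
    refine MeasurableSet.iInter fun u => MeasurableSet.iInter fun w => MeasurableSet.iInter fun _ =>
      MeasurableSet.iInter fun _ => ?_
    by_cases h : u = w
    · simp [h]
    · have : {x : V → ℝ | lab q.1 x u = lab q.1 x w → u = w} =
        {x | lab q.1 x u = lab q.1 x w}ᶜ := by ext x; simp [h]
      rw [this]
      exact (measurableSet_eq_fun (meas_lab _ u) (meas_lab _ w)).compl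
  · exact measurableSet_lt (meas_card _ fun u => meas_pt hf v u)
      (meas_card _ fun u => (measurable_pi_apply u).comp hf)

lemma meas_step [Countable V] {R : ℕ} {q : Rule} {f : (V → ℝ) → V → Fin 4} (hf : Measurable f) :
    Measurable (fun x => Step G R q x (f x)) := by
  refine measurable_pi_lambda _ fun u => ?_
  unfold Step
  refine Measurable.ite ?_ ?_ ((measurable_pi_apply u).comp hf)
  · have : {x | ∃ v, Cen G R q x (f x) v ∧ G.dist v u ≤ R} =
        ⋃ v, {x | Cen G R q x (f x) v} ∩ {_x | G.dist v u ≤ R} := by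
      ext x; simp
    rw [this]
    exact MeasurableSet.iUnion fun v => (meas_cen hf v).inter (MeasurableSet.const _)
  · exact (measurable_from_top (f := fun k : ℤ => q.2.2 k)).comp (meas_lab _ _)

lemma meas_F [Countable V] (R : ℕ) (q : ℕ → Rule) (i : ℕ) :
    Measurable (fun x => F G R q x i) := by
  induction i with
  | zero => exact measurable_const
  | succ i ih => exact meas_step ih

lemma meas_Lim [Countable V] (R : ℕ) (q : ℕ → Rule) : Measurable (Lim G R q) := by
  refine measurable_pi_lambda _ fun u => ?_
  have key : ∀ c : Fin 4, MeasurableSet {x | ∀ᶠ i in atTop, F G R q x i u = c} := by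
    intro c
    simp only [eventually_atTop, Set.setOf_exists, Set.setOf_forall]
    refine MeasurableSet.iUnion fun N => MeasurableSet.iInter fun i => MeasurableSet.iInter fun _ => ?_
    exact ((measurable_pi_apply u).comp (meas_F R q i)) (measurableSet_singleton c)
  unfold Lim
  exact Measurable.ite (key 0) measurable_const (Measurable.ite (key 1) measurable_const
    (Measurable.ite (key 2) measurable_const measurable_const))

lemma meas_tok [Countable V] {f : (V → ℝ) → V → Fin 4} (hf : Measurable f) (v m : V) :
    MeasurableSet {x | Tok G (f x) v m} := by
  have hf' : ∀ u, Measurable fun x => f x u := fun u => (measurable_pi_apply u).comp hf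
  unfold Tok
  simp only [Set.setOf_and, Set.setOf_forall]
  refine ((hf' v) (measurableSet_singleton 3)).inter ?_
  refine MeasurableSet.iInter fun x => MeasurableSet.iInter fun z => MeasurableSet.iInter fun _ =>
    MeasurableSet.iInter fun _ => MeasurableSet.iInter fun _ => MeasurableSet.inter ?_ ?_
  · exact ((hf' z) (measurableSet_singleton 3)).compl
  · exact MeasurableSet.iInter fun y => MeasurableSet.iInter fun _ => MeasurableSet.iInter fun _ =>
      MeasurableSet.iInter fun _ => (measurableSet_eq_fun (hf' y) (hf' z)).compl

lemma tok_comp (hT : G.IsTree) (ψ : G ≃g G) (l : V → Fin 4) (v m : V) :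
    Tok G (fun u => l (ψ u)) v m ↔ Tok G l (ψ v) (ψ m) := by
  have key : ∀ (ψ : G ≃g G) (l : V → Fin 4) (v m : V), Tok G l (ψ v) (ψ m) →
      Tok G (fun u => l (ψ u)) v m := by
    rintro ψ l v m ⟨h1, h2⟩
    refine ⟨h1, fun x z hb hxz hz => ?_⟩
    obtain ⟨a, b⟩ := h2 (ψ x) (ψ z) (by simpa only [iso_dist hT]) (ψ.map_adj_iff.2 hxz)
      (by simpa only [iso_dist hT])
    exact ⟨a, fun y hy hyz hlt => b (ψ y) (ψ.map_adj_iff.2 hy) (fun e => hyz (ψ.injective e))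
      (by simpa only [iso_dist hT])⟩
  refine ⟨fun h => ?_, key ψ l v m⟩
  have := key ψ.symm (fun u => l (ψ u)) (ψ v) (ψ m) (by simpa using h)
  simpa using this

end step
end T4

namespace T4
open Filter
section meas
variable {V : Type} {G : SimpleGraph V}

instance prob_I : IsProbabilityMeasure (volume.restrict (Set.Icc (0:ℝ) 1)) :=
  ⟨by simp⟩

def Prod (μ : Measure (V → ℝ)) : Prop := ∀ s : Finset V,
      Measure.map (fun (x : V → ℝ) (v : s) => x v) μ
        = Measure.pi (fun _ : s => volume.restrict (Set.Icc (0:ℝ) 1))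

lemma mu_inv {μ : Measure (V → ℝ)} (hμ : Prod μ) (ψ : V ≃ V) {S : Set (V → ℝ)}
    (hS : MeasurableSet S) : μ {x | (fun u => x (ψ u)) ∈ S} = μ S := by
  have e1 : Measure.infinitePi (fun _ : V => volume.restrict (Set.Icc (0:ℝ) 1)) = μ :=
    (Measure.isProjectiveLimit_infinitePi _).unique (fun s => hμ s)
  have e2 := Measure.infinitePi_map_piCongrLeft
    (fun _ : V => volume.restrict (Set.Icc (0:ℝ) 1)) ψ.symm
  rw [e1] at e2
  conv_rhs => rw [← e2]
  rw [Measure.map_apply (MeasurableEquiv.measurable _) hS]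
  congr 1
  ext x
  have : MeasurableEquiv.piCongrLeft (fun _ : V => ℝ) ψ.symm x = fun u => x (ψ u) := by
    funext u
    simp [MeasurableEquiv.piCongrLeft, Equiv.piCongrLeft]
  rw [Set.mem_preimage, this]
  rfl

lemma mu_swap (hT : G.IsTree) (hreg : ∀ v : V, (G.neighborSet v).ncard = 4)
    {μ : Measure (V → ℝ)} (hμ : Prod μ) {E : V → V → Set (V → ℝ)}
    (hE : ∀ u v, MeasurableSet (E u v))
    (hc : ∀ (ψ : G ≃g G) x u v, (fun w => x (ψ w)) ∈ E u v ↔ x ∈ E (ψ u) (ψ v)) (u v : V) :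
    μ (E u v) = μ (E v u) := by
  obtain ⟨φ, h1, h2⟩ := exists_swap hT hreg u v
  rw [← mu_inv hμ φ.toEquiv (hE u v)]
  congr 1
  ext x
  have := hc φ x u v
  rw [h1, h2] at this
  exact this

lemma mu_inj [Countable V] {μ : Measure (V → ℝ)} (hμ : Prod μ) :
    ∀ᵐ x ∂μ, Function.Injective x := by
  classical
  have key : ∀ u v : V, u ≠ v → ∀ᵐ x ∂μ, x u ≠ x v := by
    intro u v huv
    let s : Finset V := {u, v}
    let a : s := ⟨u, by simp [s]⟩
    let b : s := ⟨v, by simp [s]⟩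
    let W : Submodule ℝ (s → ℝ) :=
      LinearMap.ker (LinearMap.proj (R := ℝ) (φ := fun _ : s => ℝ) a - LinearMap.proj b)
    have hW : W ≠ ⊤ := by
      intro h
      have : (Pi.single a (1:ℝ) : s → ℝ) ∈ W := by rw [h]; trivial
      have hab : b ≠ a := fun e => huv (congrArg Subtype.val e).symm
      simp [W, hab] at this
    have h0 : (volume : Measure (s → ℝ)) (W : Set (s → ℝ)) = 0 := Measure.addHaar_submodule _ W hW
    have h1 : (Measure.pi (fun _ : s => volume.restrict (Set.Icc (0:ℝ) 1))) (W : Set (s → ℝ)) = 0 := by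
      rw [← Measure.restrict_pi_pi]
      exact Measure.absolutelyContinuous_of_le Measure.restrict_le_self h0
    rw [← hμ s] at h1
    have hm : Measurable (fun (x : V → ℝ) (v : s) => x v) := by fun_prop
    rw [Measure.map_apply hm (Submodule.closed_of_finiteDimensional W).measurableSet] at h1
    rw [ae_iff]
    refine measure_mono_null ?_ h1
    intro x hx
    simp only [ne_eq, not_not, Set.mem_setOf_eq] at hx
    simp [W, a, b, hx]
  have : ∀ᵐ x ∂μ, ∀ u v : V, u ≠ v → x u ≠ x v := by
    rw [ae_all_iff]; intro u
    rw [ae_all_iff]; intro v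
    by_cases h : u = v
    · simp [h]
    · filter_upwards [key u v h] with x hx _ using hx
  filter_upwards [this] with x hx u v e
  by_contra h
  exact hx u v h e

lemma count_le {α β Ω : Type} [MeasurableSpace Ω] {μ : Measure Ω} {P Q : Set Ω} {s : Finset α} {t : Finset β}
    {A : α → Set Ω} {B : β → Set Ω} (hP : MeasurableSet P) (hQ : MeasurableSet Q)
    (hA : ∀ a, MeasurableSet (A a)) (hB : ∀ a, MeasurableSet (B a))
    (h : ∀ᵐ x ∂μ, P.indicator (1 : Ω → ENNReal) x + ∑ a ∈ s, (A a).indicator (1 : Ω → ENNReal) x ≤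
      Q.indicator (1 : Ω → ENNReal) x + ∑ b ∈ t, (B b).indicator (1 : Ω → ENNReal) x) :
    μ P + ∑ a ∈ s, μ (A a) ≤ μ Q + ∑ b ∈ t, μ (B b) := by
  have m : ∀ {S : Set Ω}, MeasurableSet S → Measurable (S.indicator (1 : Ω → ENNReal)) :=
    fun hS => measurable_one.indicator hS
  have := lintegral_mono_ae h
  rw [lintegral_add_left (m hP), lintegral_add_left (m hQ), lintegral_finsetSum _ (fun a _ => m (hA a)),
    lintegral_finsetSum _ (fun a _ => m (hB a))] at this
  simpa only [lintegral_indicator_one, hP, hQ, hA, hB] using this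

lemma sum_ind {α Ω : Type} (s : Finset α) (A : α → Set Ω) (x : Ω) (p : α → Prop) [DecidablePred p]
    (hp : ∀ a ∈ s, x ∈ A a ↔ p a) :
    ∑ a ∈ s, (A a).indicator (1 : Ω → ENNReal) x = ((s.filter p).card : ENNReal) := by
  classical
  rw [Finset.card_filter, Nat.cast_sum]
  refine Finset.sum_congr rfl fun a ha => ?_
  by_cases h : p a
  · simp [(hp a ha).2 h, h]
  · have : x ∉ A a := fun h' => h ((hp a ha).1 h')
    simp [this, h]

lemma dens_step [Countable V] (hT : G.IsTree) (hreg : ∀ v : V, (G.neighborSet v).ncard = 4)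
    {μ : Measure (V → ℝ)} [IsProbabilityMeasure μ] (hμ : Prod μ) (R : ℕ) (q : ℕ → Rule)
    (i : ℕ) (o : V) :
    μ {x | F G R q x (i+1) o = 3} + μ {x | Cen G R (q i) x (F G R q x i) o}
      ≤ μ {x | F G R q x i o = 3} := by
  classical
  let C : V → Set (V → ℝ) := fun v => {x | Cen G R (q i) x (F G R q x i) v}
  let A : ℕ → V → Set (V → ℝ) := fun j v => {x | F G R q x j v = 3}
  have mC : ∀ v, MeasurableSet (C v) := fun v => meas_cen (meas_F R q i) v
  have mA : ∀ j v, MeasurableSet (A j v) := fun j v =>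
    ((measurable_pi_apply v).comp (meas_F R q j)) (measurableSet_singleton 3)
  have cC : ∀ (ψ : G ≃g G) x u, (fun w => x (ψ w)) ∈ C u ↔ x ∈ C (ψ u) := by
    intro ψ x u
    simp only [C, Set.mem_setOf_eq, F_comp hT hreg]
    exact cen_comp hT hreg ψ R (q i) x _ u
  have cA : ∀ j, ∀ (ψ : G ≃g G) x u, (fun w => x (ψ w)) ∈ A j u ↔ x ∈ A j (ψ u) := by
    intro j ψ x u
    simp only [A, Set.mem_setOf_eq, F_comp hT hreg]
  have sw : ∀ j v, μ (C v ∩ A j o) = μ (C o ∩ A j v) := fun j v =>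
    mu_swap hT hreg hμ (E := fun v u => C v ∩ A j u) (fun u v => (mC u).inter (mA j v))
      (fun ψ x u v => and_congr (cC ψ x u) (cA j ψ x v)) v o
  have h1 : μ (A (i+1) o) + ∑ v ∈ bf G o R, μ (C v ∩ A i o) ≤
      μ (A i o) + ∑ v ∈ bf G o R, μ (C v ∩ A (i+1) o) := by
    refine count_le (mA _ _) (mA _ _) (fun v => (mC v).inter (mA _ _))
      (fun v => (mC v).inter (mA _ _)) (ae_of_all _ fun x => ?_)
    by_cases h : ∃ v ∈ bf G o R, x ∈ C v
    · obtain ⟨v, hv, hx⟩ := h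
      have hs : ∀ j, ∑ w ∈ bf G o R, (C w ∩ A j o).indicator (1 : (V → ℝ) → ENNReal) x =
          (A j o).indicator (1 : (V → ℝ) → ENNReal) x := by
        intro j
        rw [Finset.sum_eq_single_of_mem v hv]
        · by_cases hj : x ∈ A j o <;> simp [hx, hj]
        · intro w hw hne
          refine Set.indicator_of_notMem (fun hh => hne ?_) _
          rw [mem_bf hT hreg] at hv hw
          have := tri hT w o v
          have := dc (G := G) w o
          exact cen_unique hh.1 hx (by omega)
      rw [hs, hs, add_comm]
    · push Not at h
      have hs : ∀ j, ∑ w ∈ bf G o R, (C w ∩ A j o).indicator (1 : (V → ℝ) → ENNReal) x = 0 :=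
        fun j => Finset.sum_eq_zero fun w hw => Set.indicator_of_notMem (fun hh => h w hw hh.1) _
      rw [hs, hs, add_zero, add_zero]
      have e : F G R q x (i+1) o = F G R q x i o :=
        step_neg fun v hd => h v ((mem_bf hT hreg).2 (by rwa [dc]))
      by_cases h3 : F G R q x i o = 3
      · simp [A, e, h3]
      · simp [A, e, h3]
  have h2 : μ (C o) + ∑ v ∈ bf G o R, μ (C o ∩ A (i+1) v) ≤
      μ ∅ + ∑ v ∈ bf G o R, μ (C o ∩ A i v) := by
    refine count_le (mC _) MeasurableSet.empty (fun v => (mC _).inter (mA _ _))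
      (fun v => (mC _).inter (mA _ _)) (ae_of_all _ fun x => ?_)
    by_cases hx : x ∈ C o
    · rw [sum_ind _ _ x (fun u => pt G R (q i) x (F G R q x i) o u = 3),
        sum_ind _ _ x (fun u => F G R q x i u = 3)]
      · have := hx.2.2.2
        simp only [hx, Set.indicator_of_mem, Pi.one_apply, Set.indicator_empty, zero_add]
        rw [add_comm]
        exact_mod_cast this
      · intro a _
        exact ⟨fun h => h.2, fun h => ⟨hx, h⟩⟩
      · intro a ha
        rw [mem_bf hT hreg] at ha
        have := step_eq hT hx (u := a) (by omega)
        rw [← this]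
        exact ⟨fun h => h.2, fun h => ⟨hx, h⟩⟩
    · simp [hx]
  simp only [sw] at h1
  rw [measure_empty, zero_add] at h2
  have hfin : ∑ v ∈ bf G o R, μ (C o ∩ A (i+1) v) ≠ ⊤ :=
    ENNReal.sum_ne_top.2 fun v _ => measure_ne_top _ _
  have h3 : (μ (A (i+1) o) + μ (C o)) + ∑ v ∈ bf G o R, μ (C o ∩ A (i+1) v) ≤
      μ (A i o) + ∑ v ∈ bf G o R, μ (C o ∩ A (i+1) v) := by
    rw [add_assoc]
    exact (add_le_add_right h2 _).trans h1
  exact (ENNReal.add_le_add_iff_right hfin).1 h3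

lemma cen_sum [Countable V] (hT : G.IsTree) (hreg : ∀ v : V, (G.neighborSet v).ncard = 4)
    {μ : Measure (V → ℝ)} [IsProbabilityMeasure μ] (hμ : Prod μ) (R : ℕ) (q : ℕ → Rule)
    (o : V) : ∑' i, μ {x | Cen G R (q i) x (F G R q x i) o} ≤ 1 := by
  refine ENNReal.tsum_le_of_sum_range_le fun n => ?_
  have : ∑ i ∈ Finset.range n, μ {x | Cen G R (q i) x (F G R q x i) o} +
      μ {x | F G R q x n o = 3} ≤ 1 := by
    induction n with
    | zero => simpa using prob_le_one
    | succ n ih =>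
      rw [Finset.sum_range_succ, add_assoc]
      refine le_trans (add_le_add_right ?_ _) ih
      rw [add_comm]
      exact dens_step hT hreg hμ R q n o
  exact le_self_add.trans this

lemma ex_q : ∃ q : ℕ → Rule, ∀ r, ∃ᶠ i in atTop, q i = r := by
  obtain ⟨e, he⟩ := exists_surjective_nat Rule
  refine ⟨fun i => e i.unpair.1, fun r => ?_⟩
  obtain ⟨k, rfl⟩ := he r
  rw [frequently_atTop]
  intro m
  exact ⟨Nat.pair k m, Nat.right_le_pair k m, by simp⟩

lemma ae_good [Countable V] (hT : G.IsTree) (hreg : ∀ v : V, (G.neighborSet v).ncard = 4)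
    {μ : Measure (V → ℝ)} [IsProbabilityMeasure μ] (hμ : Prod μ) (R : ℕ) {q : ℕ → Rule}
    (hq : ∀ r, ∃ᶠ i in atTop, q i = r) :
    ∀ᵐ x ∂μ, Valid G (Lim G R q x) ∧ NoImp G R (Lim G R q x) := by
  have : ∀ᵐ x ∂μ, ∀ v, ∀ᶠ i in atTop, ¬ Cen G R (q i) x (F G R q x i) v := by
    rw [ae_all_iff]
    intro v
    exact ae_eventually_notMem (ne_top_of_le_ne_top ENNReal.one_ne_top (cen_sum hT hreg hμ R q v))
  filter_upwards [this, mu_inj hμ] with x h1 h2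
  exact lim_good hT hreg hq h2 h1

lemma red_le [Countable V] (hT : G.IsTree) (hreg : ∀ v : V, (G.neighborSet v).ncard = 4)
    {μ : Measure (V → ℝ)} [IsProbabilityMeasure μ] (hμ : Prod μ) (K : ℕ) {q : ℕ → Rule}
    (hq : ∀ r, ∃ᶠ i in atTop, q i = r) (o : V) :
    ((K + 1 : ℕ) : ENNReal) * μ {x | Lim G (2 * K) q x o = 3} ≤ 1 := by
  classical
  have hg := ae_good hT hreg hμ (2 * K) hq
  let E : V → V → Set (V → ℝ) := fun v w => {x | Tok G (Lim G (2 * K) q x) v w}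
  have mE : ∀ v w, MeasurableSet (E v w) := fun v w => meas_tok (meas_Lim _ _) v w
  have mR : MeasurableSet {x | Lim G (2 * K) q x o = 3} :=
    ((measurable_pi_apply o).comp (meas_Lim _ _)) (measurableSet_singleton 3)
  have sw : ∀ w, μ (E o w) = μ (E w o) := fun w => mu_swap hT hreg hμ mE (by
    intro ψ x u v
    simp only [E, Set.mem_setOf_eq, Lim_comp hT hreg]
    exact tok_comp hT ψ _ u v) o w
  have h1 : μ ∅ + ∑ _k ∈ Finset.range (K + 1), μ {x | Lim G (2 * K) q x o = 3} ≤
      μ ∅ + ∑ w ∈ bf G o K, μ (E o w) := by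
    refine count_le MeasurableSet.empty MeasurableSet.empty (fun _ => mR) (fun w => mE o w) ?_
    filter_upwards [hg] with x hx
    by_cases h : Lim G (2 * K) q x o = 3
    · rw [sum_ind (bf G o K) _ x (fun w => Tok G (Lim G (2 * K) q x) o w) (fun a _ => Iff.rfl)]
      have := tok_many hT hreg hx.1 hx.2 le_rfl h
      simp only [Set.indicator_empty, zero_add]
      simp only [Set.indicator_of_mem (show x ∈ {x | Lim G (2 * K) q x o = 3} from h),
        Pi.one_apply, Finset.sum_const, Finset.card_range, nsmul_eq_mul, mul_one]
      exact_mod_cast this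
    · simp [h]
  have h2 : μ ∅ + ∑ w ∈ bf G o K, μ (E w o) ≤ μ Set.univ + ∑ w ∈ (∅ : Finset V), μ (E w o) := by
    refine count_le MeasurableSet.empty MeasurableSet.univ (fun w => mE w o) (fun w => mE w o) ?_
    filter_upwards [hg] with x hx
    rw [sum_ind (bf G o K) _ x (fun w => Tok G (Lim G (2 * K) q x) w o) (fun a _ => Iff.rfl)]
    have : ((bf G o K).filter (fun w => Tok G (Lim G (2 * K) q x) w o)).card ≤ 1 := by
      rw [Finset.card_le_one]
      intro a ha b hb
      rw [Finset.mem_filter, mem_bf hT hreg, dc] at ha hb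
      exact tok_disjoint hT hreg hx.1 hx.2 le_rfl ha.2 hb.2 ha.1 hb.1
    simp only [Set.indicator_empty, zero_add, Finset.sum_empty, add_zero, Set.indicator_univ,
      Pi.one_apply]
    exact_mod_cast this
  simp only [sw] at h1
  simp only [measure_empty, zero_add, Finset.sum_const, Finset.card_range, nsmul_eq_mul,
    Finset.sum_empty, add_zero, measure_univ] at h1 h2
  exact h1.trans h2

end meas
end T4

/-- For every ε > 0, the 4-regular tree admits an fiid labelling with 4 labels which is
a.e. proper (at each non-red vertex) and assigns the label 3 to a given vertex with probability at most ε. -/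
theorem fiid_red_labelling_of_T4
    (V : Type) [Countable V] [Infinite V]
    (G : SimpleGraph V) (hconn : G.Connected) (hacyc : G.IsAcyclic)
    (hreg : ∀ v : V, (G.neighborSet v).ncard = 4)
    (μ : Measure (V → ℝ)) [IsProbabilityMeasure μ]
    (hμ : ∀ s : Finset V,
      Measure.map (fun (x : V → ℝ) (v : s) => x v) μ
        = Measure.pi (fun _ : s => volume.restrict (Set.Icc (0:ℝ) 1)))
    (ε : ℝ) (hε : 0 < ε) :
    ∃ f : (V → ℝ) → (V → Fin 4),
      Measurable f ∧
      (∀ (φ : G ≃g G) (x : V → ℝ) (v : V),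
        f (fun u => x (φ.symm u)) v = f x (φ.symm v)) ∧
      (∀ᵐ x ∂μ, ∀ u v : V, G.Adj u v → f x v ≠ 3 → f x u ≠ f x v) ∧
      (∀ v : V, μ {x | f x v = 3} ≤ ENNReal.ofReal ε) := by
  have hT : G.IsTree := ⟨hconn, hacyc⟩
  obtain ⟨q, hq⟩ := T4.ex_q
  obtain ⟨K, hK⟩ := exists_nat_one_div_lt hε
  refine ⟨T4.Lim G (2 * K) q, T4.meas_Lim _ _, ?_, ?_, ?_⟩
  · intro φ x v
    exact congrFun (T4.Lim_comp hT hreg φ.symm (2 * K) q x) v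
  · filter_upwards [T4.ae_good hT hreg hμ (2 * K) hq] with x hx
    exact hx.1
  · intro v
    have h := T4.red_le hT hreg hμ K hq v
    have h1 : μ {x | T4.Lim G (2 * K) q x v = 3} ≤ (((K + 1 : ℕ) : ENNReal))⁻¹ := by
      rw [ENNReal.le_inv_iff_mul_le, mul_comm]
      exact h
    refine h1.trans ?_
    rw [← ENNReal.ofReal_natCast, ← ENNReal.ofReal_inv_of_pos (by positivity)]
    apply ENNReal.ofReal_le_ofReal
    push_cast
    rw [← one_div]
    exact hK.le
end

section
/- For every ε > 0 there exists an fiid labelling f : X → (V → Fin 5) of the 6-regular tree T_6 (where the labels 0, 1, 2, 3 are colors and the label 4 is 'red') such that for μ-a.e. x ∈ X: for every vertex v with f(x)(v) ≠ 4 and every neighbour u of v one has f(x)(u) ≠ f(x)(v); and for every vertex v, μ({x : f(x)(v) = 4}) ≤ ε. -/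
open MeasureTheory
namespace T6

section Tree

variable {V : Type} {G : SimpleGraph V}

/-- in a tree, a neighbour other than the one towards `y` is farther from `y` -/
lemma closer_unique (hT : G.IsTree) {y a a' b : V} (ha : G.Adj b a) (ha' : G.Adj b a')
    (h : G.dist y a < G.dist y b) (h' : G.dist y a' < G.dist y b) : a = a' := by
  obtain ⟨p, hp⟩ := hT.connected.exists_walk_length_eq_dist y a
  obtain ⟨p', hp'⟩ := hT.connected.exists_walk_length_eq_dist y a'
  have e1 := hT.dist_eq_dist_add_one_of_adj y ha
  have e2 := hT.dist_eq_dist_add_one_of_adj y ha'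
  have q : (p.concat ha.symm).IsPath :=
    SimpleGraph.Walk.isPath_of_length_eq_dist _ (by
      rw [SimpleGraph.Walk.length_concat]; omega)
  have q' : (p'.concat ha'.symm).IsPath :=
    SimpleGraph.Walk.isPath_of_length_eq_dist _ (by
      rw [SimpleGraph.Walk.length_concat]; omega)
  have := (hT.existsUnique_path y b).unique q q'
  exact (SimpleGraph.Walk.concat_inj this).1

lemma farther (hT : G.IsTree) {y a b b' : V} (ha : G.Adj b a) (hb : G.Adj b b')
    (hne : b' ≠ a) (h : G.dist y a < G.dist y b) : G.dist y b' = G.dist y b + 1 := by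
  rcases hT.dist_eq_dist_add_one_of_adj y hb with h1 | h1
  · exact absurd (closer_unique hT hb ha (by omega) h) hne
  · exact h1

lemma exists_closer (hT : G.IsTree) {y b : V} (hne : b ≠ y) :
    ∃ a, G.Adj b a ∧ G.dist y b = G.dist y a + 1 := by
  obtain ⟨p, hp⟩ := hT.connected.exists_walk_length_eq_dist b y
  cases p with
  | nil => exact absurd rfl hne
  | @cons _ a _ h q =>
    refine ⟨a, h, ?_⟩
    have := SimpleGraph.dist_le q
    rw [SimpleGraph.Walk.length_cons] at hp
    rw [SimpleGraph.dist_comm] at hp this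
    rcases hT.dist_eq_dist_add_one_of_adj y h with h1 | h1 <;> omega

open Classical in
lemma exists_edge_labels (hT : G.IsTree) (hreg : ∀ v : V, (G.neighborSet v).ncard = 6) :
    ∃ s : Fin 6 → V → V, (∀ i v, s i (s i v) = v) ∧ (∀ i v, G.Adj v (s i v)) ∧
      (∀ v w, G.Adj v w → ∃ i, s i v = w) ∧ (∀ i j v, s i v = s j v → i = j) := by
  obtain ⟨r⟩ := hT.connected.nonempty
  have hE : ∀ v p : V, ∀ k : Fin 6, ∃ E : V → Fin 6,
      Set.BijOn E (G.neighborSet v) Set.univ ∧ (G.Adj v p → E p = k) := by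
    intro v p k
    have hf : (G.neighborSet v).Finite := Set.finite_of_ncard_pos (by rw [hreg]; norm_num)
    have hc : Nat.card (G.neighborSet v) = 6 := by rw [← hreg v]; rfl
    have := hf.to_subtype
    have e : G.neighborSet v ≃ Fin 6 := (Finite.equivFinOfCardEq hc)
    by_cases hp : G.Adj v p
    · let e' : G.neighborSet v ≃ Fin 6 := e.trans (Equiv.swap (e ⟨p, hp⟩) k)
      refine ⟨fun x => if h : G.Adj v x then e' ⟨x, h⟩ else 0, ⟨fun _ _ => trivial, ?_, ?_⟩, ?_⟩
      · intro x hx y hy hxy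
        have hx' : G.Adj v x := hx
        have hy' : G.Adj v y := hy
        simp only [hx', hy', dif_pos] at hxy
        exact congrArg Subtype.val (e'.injective hxy)
      · intro i _
        refine ⟨(e'.symm i).1, (e'.symm i).2, ?_⟩
        have : G.Adj v (e'.symm i).1 := (e'.symm i).2
        simp only [this, dif_pos]
        exact e'.apply_symm_apply i
      · intro h
        simp [h, e']
    · refine ⟨fun x => if h : G.Adj v x then e ⟨x, h⟩ else 0, ⟨fun _ _ => trivial, ?_, ?_⟩, ?_⟩
      · intro x hx y hy hxy
        have hx' : G.Adj v x := hx
        have hy' : G.Adj v y := hy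
        simp only [hx', hy', dif_pos] at hxy
        exact congrArg Subtype.val (e.injective hxy)
      · intro i _
        refine ⟨(e.symm i).1, (e.symm i).2, ?_⟩
        have : G.Adj v (e.symm i).1 := (e.symm i).2
        simp only [this, dif_pos]
        exact e.apply_symm_apply i
      · intro h; exact absurd h hp
  have hpar : ∀ v : V, ∃ a, v ≠ r → G.Adj v a ∧ G.dist r v = G.dist r a + 1 := by
    intro v
    by_cases h : v = r
    · exact ⟨r, fun h' => absurd h h'⟩
    · obtain ⟨a, ha⟩ := exists_closer hT h
      exact ⟨a, fun _ => ha⟩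
  choose par hpar using hpar
  choose E hEb hEp using fun v k => hE v (par v) k
  let colN : ℕ → V → Fin 6 := fun n => Nat.rec (fun _ => 0)
    (fun _ f v => E (par v) (f (par v)) v) n
  let col : V → Fin 6 := fun v => colN (G.dist r v) v
  have hcol : ∀ v, v ≠ r → col v = E (par v) (col (par v)) v := by
    intro v hv
    have := (hpar v hv).2
    change colN (G.dist r v) v = _
    rw [this]
  let L : V → V → Fin 6 := fun v => E v (col v)
  have hL1 : ∀ w, w ≠ r → L (par w) w = L w (par w) := by
    intro w hw
    change E (par w) (col (par w)) w = E w (col w) (par w)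
    rw [hEp w (col w) (hpar w hw).1, ← hcol w hw]
  have hL : ∀ v w, G.Adj v w → L v w = L w v := by
    intro v w h
    rcases hT.dist_eq_dist_add_one_of_adj r h with h1 | h1
    · have hv : v ≠ r := by rintro rfl; simp at h1
      have : w = par v := closer_unique hT (y := r) h (hpar v hv).1 (by omega)
        (by have := (hpar v hv).2; omega)
      rw [this]; exact (hL1 v hv).symm
    · have hv : w ≠ r := by rintro rfl; simp at h1
      have : v = par w := closer_unique hT (y := r) h.symm (hpar w hv).1 (by omega)
        (by have := (hpar w hv).2; omega)
      rw [this]; exact (hL1 w hv)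
  have hs : ∀ (i : Fin 6) (v : V), ∃ w, G.Adj v w ∧ L v w = i := fun i v =>
    (hEb v (col v)).surjOn (Set.mem_univ i)
  choose s hs1 hs2 using hs
  have huniq : ∀ v w w', G.Adj v w → G.Adj v w' → L v w = L v w' → w = w' := fun v w w' h h' e =>
    (hEb v (col v)).injOn h h' e
  refine ⟨s, ?_, hs1, ?_, ?_⟩
  · intro i v
    apply huniq (s i v) _ _ (hs1 _ _) (hs1 _ _).symm
    rw [hs2, ← hL _ _ (hs1 i v), hs2]
  · intro v w h
    exact ⟨L v w, huniq v _ _ (hs1 _ _) h (hs2 _ _)⟩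
  · intro i j v h
    rw [← hs2 i v, h, hs2]

/-- a family of automorphisms, closed under inverses, sending `o` to each vertex once -/
lemma exists_family (hT : G.IsTree) (hreg : ∀ v : V, (G.neighborSet v).ncard = 6) (o : V) :
    ∃ Φ : V → (G ≃g G), (∀ v, Φ v o = v) ∧ ∀ v, Φ ((Φ v).symm o) = (Φ v).symm := by
  obtain ⟨s, ss, sadj, sex, sinj⟩ := exists_edge_labels hT hreg
  let act : List (Fin 6) → V → V := fun l v => l.foldr s v
  have act_cons : ∀ i l v, act (i :: l) v = s i (act l v) := fun _ _ _ => rfl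
  have act_app : ∀ l l' v, act (l ++ l') v = act l (act l' v) := by
    intro l l' v; simp [act]
  have act_rev : ∀ l v, act l.reverse (act l v) = v := by
    intro l
    induction l with
    | nil => intro v; rfl
    | cons i l ih =>
      intro v
      rw [List.reverse_cons, act_app]
      change act l.reverse (s i (s i (act l v))) = v
      rw [ss, ih]
  have hred : ∀ l : List (Fin 6), ∃ r : List (Fin 6), List.IsChain (· ≠ ·) r ∧ act l = act r := by
    intro l
    induction l with
    | nil => exact ⟨[], by simp, rfl⟩
    | cons i l ih =>
      obtain ⟨r, hr, e⟩ := ih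
      have e1 : act (i :: l) = act (i :: r) := by
        funext v; rw [act_cons, act_cons, e]
      cases r with
      | nil => exact ⟨[i], by simp, e1⟩
      | cons j r =>
        by_cases hij : i = j
        · subst hij
          refine ⟨r, (List.isChain_cons.1 hr).2, ?_⟩
          rw [e1]; funext v; rw [act_cons, act_cons, ss]
        · exact ⟨i :: j :: r, List.isChain_cons_cons.2 ⟨hij, hr⟩, e1⟩
  have hdist : ∀ r : List (Fin 6), List.IsChain (· ≠ ·) r → ∀ u, G.dist u (act r u) = r.length := by
    intro r
    induction r with
    | nil => intro _ u; simp [act]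
    | cons i r ih =>
      intro hr u
      have ih' := ih (List.isChain_cons.1 hr).2 u
      cases r with
      | nil =>
        have : G.Adj u (act [i] u) := sadj i u
        rw [SimpleGraph.dist_eq_one_iff_adj.2 this]; rfl
      | cons j r =>
        have h2 := ih (List.isChain_cons.1 hr).2 u
        have hij := (List.isChain_cons_cons.1 hr).1
        have hadj : G.Adj (act (j :: r) u) (act (i :: j :: r) u) := sadj _ _
        have hadj2 : G.Adj (act (j :: r) u) (act r u) := (sadj j (act r u)).symm
        have hlt : G.dist u (act r u) < G.dist u (act (j :: r) u) := by
          rw [h2]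
          have hle : ∀ l : List (Fin 6), G.dist u (act l u) ≤ l.length := by
            intro l
            induction l with
            | nil => simp [act]
            | cons k l ih3 =>
              have h3 := hT.dist_eq_dist_add_one_of_adj u (sadj k (act l u))
              rw [act_cons, List.length_cons]; omega
          have := hle r
          rw [List.length_cons]; omega
        have hne : act (i :: j :: r) u ≠ act r u := by
          intro h
          have : s i (act (j :: r) u) = s j (act (j :: r) u) := by
            rw [act_cons, act_cons] at h
            rw [act_cons, ss j, h]
          exact hij (sinj _ _ _ this)
        rw [farther hT hadj2 hadj hne hlt, h2]; rfl
  have hfree : ∀ l u v, act l u = u → act l v = v := by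
    intro l u v h
    obtain ⟨r, hr, e⟩ := hred l
    have := hdist r hr u
    rw [← e, h, SimpleGraph.dist_self] at this
    have : r = [] := List.length_eq_zero_iff.1 this.symm
    rw [e, this]; rfl
  have hwd : ∀ l l' u v, act l u = act l' u → act l v = act l' v := by
    intro l l' u v h
    have h1 : act (l'.reverse ++ l) u = u := by rw [act_app, h, act_rev]
    have h2 := hfree _ _ v h1
    rw [act_app] at h2
    have h3 := congrArg (act l') h2
    have h4 := act_rev l'.reverse (act l v)
    rw [List.reverse_reverse] at h4
    rw [h4] at h3; exact h3
  have hreach : ∀ u x, ∃ l, act l u = x := by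
    intro u x
    obtain ⟨p⟩ := hT.connected.preconnected x u
    induction p with
    | nil => exact ⟨[], rfl⟩
    | @cons a b c h p ih =>
      obtain ⟨l, hl⟩ := ih
      obtain ⟨i, hi⟩ := sex _ _ h.symm
      exact ⟨i :: l, by rw [act_cons, hl, hi]⟩
  choose W hW using hreach o
  let Ψ : V → V → V := fun v x => act (W x) v
  have hΨ : ∀ v l, Ψ v (act l o) = act l v := fun v l => hwd _ _ o v (hW _)
  have hΨo : ∀ v, Ψ v o = v := fun v => hΨ v []
  have hΨs : ∀ v i x, Ψ v (s i x) = s i (Ψ v x) := by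
    intro v i x
    have h1 := hΨ v (i :: W x)
    rw [act_cons, act_cons, hW] at h1
    exact h1
  have hext : ∀ f g : V → V, (∀ i x, f (s i x) = s i (f x)) → (∀ i x, g (s i x) = s i (g x)) →
      f o = g o → f = g := by
    intro f g hf hg h
    have key : ∀ f : V → V, (∀ i x, f (s i x) = s i (f x)) → ∀ l, f (act l o) = act l (f o) := by
      intro f hf l
      induction l with
      | nil => rfl
      | cons i l ih => rw [act_cons, act_cons, hf, ih]
    funext x
    rw [← hW x, key f hf, key g hg, h]
  let inv : V → V := fun v => act (W v).reverse o
  have hinv1 : ∀ v, Ψ (inv v) v = o := by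
    intro v
    have h1 := hΨ (inv v) (W v)
    rw [hW] at h1
    rw [h1]
    have h4 := act_rev (W v).reverse o
    rwa [List.reverse_reverse] at h4
  have hinv2 : ∀ v, Ψ v (inv v) = o := by
    intro v
    rw [show inv v = act (W v).reverse o from rfl, hΨ]
    have h4 := act_rev (W v) o
    rwa [hW] at h4
  have hc1 : ∀ v x, Ψ (inv v) (Ψ v x) = x := by
    intro v x
    have := hext (fun x => Ψ (inv v) (Ψ v x)) id (fun i x => by simp only [hΨs])
      (fun i x => rfl) (by simp only [hΨo, hinv1, id])
    exact congrFun this x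
  have hc2 : ∀ v x, Ψ v (Ψ (inv v) x) = x := by
    intro v x
    have := hext (fun x => Ψ v (Ψ (inv v) x)) id (fun i x => by simp only [hΨs])
      (fun i x => rfl) (by simp only [hΨo, hinv2, id])
    exact congrFun this x
  have hadj : ∀ v x y, G.Adj x y → G.Adj (Ψ v x) (Ψ v y) := by
    intro v x y h
    obtain ⟨i, rfl⟩ := sex _ _ h
    rw [hΨs]; exact sadj _ _
  let Φ : V → (G ≃g G) := fun v =>
    { toFun := Ψ v, invFun := Ψ (inv v), left_inv := hc1 v, right_inv := hc2 v,
      map_rel_iff' := by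
        intro x y
        constructor
        · intro h
          have := hadj (inv v) _ _ h
          simpa [hc1] using this
        · exact hadj v x y }
  refine ⟨Φ, hΨo, fun v => ?_⟩
  have e1 : (Φ v).symm o = inv v := hΨo (inv v)
  rw [e1]
  ext x
  rfl

lemma dist_iso (φ : G ≃g G) (u v : V) : G.dist (φ u) (φ v) = G.dist u v := by
  have key : ∀ (ψ : G ≃g G) u v, G.Reachable u v → G.dist (ψ u) (ψ v) ≤ G.dist u v := by
    intro ψ u v h
    obtain ⟨p, hp⟩ := h.exists_walk_length_eq_dist
    have := SimpleGraph.dist_le (p.map ψ.toHom)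
    rw [SimpleGraph.Walk.length_map, hp] at this
    exact this
  by_cases h : G.Reachable u v
  · apply le_antisymm (key φ u v h)
    have h' : G.Reachable (φ u) (φ v) := h.map φ.toHom
    have := key φ.symm _ _ h'
    simpa using this
  · have h' : ¬ G.Reachable (φ u) (φ v) := by
      intro h'
      exact h (by simpa using h'.map φ.symm.toHom)
    rw [SimpleGraph.dist_eq_zero_of_not_reachable h, SimpleGraph.dist_eq_zero_of_not_reachable h']

end Tree

section Comb

variable {V : Type} (G : SimpleGraph V) [G.LocallyFinite]

open Classical in
/-- the ball of radius `n`, as a finset -/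
noncomputable def bl : ℕ → V → Finset V
  | 0, v => {v}
  | n + 1, v => bl n v ∪ (bl n v).biUnion (fun w => G.neighborFinset w)

variable {G}

lemma mem_bl (hT : G.IsTree) (n : ℕ) (v w : V) : w ∈ bl G n v ↔ G.dist v w ≤ n := by
  induction n generalizing w with
  | zero =>
    simp only [bl, Finset.mem_singleton, Nat.le_zero]
    rw [hT.connected.dist_eq_zero_iff]; exact eq_comm
  | succ n ih =>
    simp only [bl, Finset.mem_union, Finset.mem_biUnion, SimpleGraph.mem_neighborFinset, ih]
    constructor
    · rintro (h | ⟨a, h, ha⟩)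
      · omega
      · rcases hT.dist_eq_dist_add_one_of_adj v ha with h1 | h1 <;> omega
    · intro h
      by_cases hw : w = v
      · left; subst hw; simp
      · obtain ⟨a, ha, hd⟩ := exists_closer hT hw
        exact Or.inr ⟨a, by omega, ha.symm⟩

variable (G)

open Classical in
/-- number of neighbours of `b` with colour `k` -/
noncomputable def nc (c : V → Fin 4) (b : V) (k : Fin 4) : ℕ :=
  ((G.neighborFinset b).filter (fun y => c y = k)).card

/-- number of conflicts at `w` -/
noncomputable def cd (c : V → Fin 4) (w : V) : ℕ := nc G c w (c w)

/-- energy in a ball -/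
noncomputable def En (c : V → Fin 4) (v : V) (R : ℕ) : ℕ := ∑ w ∈ bl G (R + 1) v, cd G c w

/-- `c` can be improved inside the ball of radius `R` around `v` -/
def Imp (c : V → Fin 4) (v : V) (R : ℕ) : Prop :=
  ∃ g : V → Fin 4, (∀ y, R < G.dist v y → g y = c y) ∧ En G g v R < En G c v R

/-- chains of token moves -/
def Reach (c : V → Fin 4) (v : V) : ℕ → V → V → Prop
  | 0, a, b => b = v ∧ G.Adj a v ∧ c a = c v
  | k + 1, b, b' => ∃ a, Reach c v k a b ∧ G.Adj b b' ∧ b' ≠ a ∧ c b' ≠ c b ∧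
      ∀ y, G.Adj b y → y ≠ a → c y = c b' → y = b'

variable {G}

lemma sum_nc (c : V → Fin 4) (b : V) : ∑ k, nc G c b k = G.degree b := by
  classical
  unfold nc
  rw [← SimpleGraph.card_neighborFinset_eq_degree]
  exact (Finset.card_eq_sum_card_fiberwise (fun _ _ => Finset.mem_univ _)).symm

open Classical in
lemma nc_eq_sum (c : V → Fin 4) (b : V) (k : Fin 4) :
    nc G c b k = ∑ y ∈ G.neighborFinset b, if c y = k then 1 else 0 := by
  unfold nc; rw [Finset.card_filter]

lemma nc_congr {c g : V → Fin 4} {b : V} (h : ∀ y, G.Adj b y → c y = g y) (k : Fin 4) :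
    nc G c b k = nc G g b k := by
  classical
  rw [nc_eq_sum, nc_eq_sum]
  apply Finset.sum_congr rfl
  intro y hy
  rw [h y (by simpa using hy)]

lemma cd_congr {c g : V → Fin 4} {b : V} (hb : c b = g b) (h : ∀ y, G.Adj b y → c y = g y) :
    cd G c b = cd G g b := by
  unfold cd; rw [hb, nc_congr h]

open Classical in
lemma cd_update (c : V → Fin 4) (b w : V) (k : Fin 4) :
    cd G (Function.update c b k) w + (if w = b then nc G c b (c b) else 0)
      + (if w ∈ G.neighborFinset b then (if c w = c b then 1 else 0) else 0)
    = cd G c w + (if w = b then nc G c b k else 0)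
      + (if w ∈ G.neighborFinset b then (if c w = k then 1 else 0) else 0) := by
  by_cases hw : w = b
  · subst hw
    have h1 : cd G (Function.update c w k) w = nc G c w k := by
      unfold cd
      rw [Function.update_self]
      apply nc_congr
      intro y hy
      rw [Function.update_of_ne hy.ne']
    rw [h1]; simp [cd]; ring
  · by_cases ha : G.Adj b w
    · have e1 : cd G (Function.update c b k) w =
          (∑ y ∈ (G.neighborFinset w).erase b, if c y = c w then 1 else 0)
            + if k = c w then 1 else 0 := by
        unfold cd
        rw [nc_eq_sum, Function.update_of_ne hw,
          ← Finset.sum_erase_add _ _ (a := b) (by simpa using ha.symm), Function.update_self]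
        congr 1
        apply Finset.sum_congr rfl
        intro y hy
        rw [Function.update_of_ne (Finset.ne_of_mem_erase hy)]
      have e2 : cd G c w =
          (∑ y ∈ (G.neighborFinset w).erase b, if c y = c w then 1 else 0)
            + if c b = c w then 1 else 0 := by
        unfold cd
        rw [nc_eq_sum, ← Finset.sum_erase_add _ _ (a := b) (by simpa using ha.symm)]
      rw [e1, e2]
      simp only [hw, if_false, SimpleGraph.mem_neighborFinset, ha, if_true, eq_comm (a := c w)]
      ring
    · have : cd G (Function.update c b k) w = cd G c w := by
        apply cd_congr
        · rw [Function.update_of_ne hw]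
        · intro y hy
          rw [Function.update_of_ne]
          rintro rfl; exact ha hy.symm
      simp [hw, ha, this]

open Classical in
lemma En_update (hT : G.IsTree) (c : V → Fin 4) (v b : V) (R : ℕ) (hb : G.dist v b ≤ R)
    (k : Fin 4) :
    En G (Function.update c b k) v R + 2 * nc G c b (c b) = En G c v R + 2 * nc G c b k := by
  have hs := Finset.sum_congr (rfl : bl G (R + 1) v = bl G (R + 1) v)
    (fun w _ => cd_update (G := G) c b w k)
  have hbm : b ∈ bl G (R + 1) v := by rw [mem_bl hT]; omega
  have hsub : bl G (R + 1) v ∩ G.neighborFinset b = G.neighborFinset b := by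
    apply Finset.inter_eq_right.2
    intro y hy
    rw [mem_bl hT]
    rw [SimpleGraph.mem_neighborFinset] at hy
    rcases hT.dist_eq_dist_add_one_of_adj v hy with h1 | h1 <;> omega
  simp only [Finset.sum_add_distrib, Finset.sum_ite_eq', hbm, if_true] at hs
  rw [Finset.sum_ite_mem, Finset.sum_ite_mem, hsub, ← nc_eq_sum, ← nc_eq_sum] at hs
  unfold En
  omega

lemma local_min (hT : G.IsTree) {c h : V → Fin 4} {v b : V} {R : ℕ} (hI : ¬ Imp G c v R)
    (hh : ∀ y, R < G.dist v y → h y = c y) (hE : En G h v R ≤ En G c v R)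
    (hb : G.dist v b ≤ R) (k : Fin 4) : nc G h b (h b) ≤ nc G h b k := by
  classical
  by_contra hlt
  apply hI
  refine ⟨Function.update h b k, ?_, ?_⟩
  · intro y hy
    rw [Function.update_of_ne (by rintro rfl; omega), hh y hy]
  · have := En_update hT h v b R hb k
    omega

lemma Reach.adj {c : V → Fin 4} {v : V} {k : ℕ} {a b : V} (h : Reach G c v k a b) :
    G.Adj a b := by
  cases k with
  | zero => obtain ⟨rfl, h, _⟩ := h; exact h
  | succ k => obtain ⟨_, _, h, _⟩ := h; exact h

lemma Reach.dist (hT : G.IsTree) {c : V → Fin 4} {v : V} {k : ℕ} {a b : V}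
    (h : Reach G c v k a b) : G.dist v b = k := by
  induction k generalizing a b with
  | zero => obtain ⟨rfl, _⟩ := h; simp
  | succ k ih =>
    obtain ⟨a', h1, h2, h3, _⟩ := h
    have h4 := ih h1
    cases k with
    | zero =>
      obtain ⟨rfl, _⟩ := h1
      exact SimpleGraph.dist_eq_one_iff_adj.2 h2
    | succ k =>
      obtain ⟨a'', h5, h6, h7, _⟩ := id h1
      have h8 := ih (a := a') h1
      have h9 := h1.adj
      have : G.dist v a' < G.dist v a := by
        rw [h4]
        -- a' is at distance k
        have aux : ∀ (k : ℕ) (a b : V), Reach G c v (k+1) a b → G.dist v a ≤ k := by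
          intro k
          induction k with
          | zero => rintro a b ⟨x, ⟨rfl, _⟩, _⟩; simp
          | succ k ih =>
            rintro a b ⟨x, h, _⟩
            have := ih _ _ h
            rcases hT.dist_eq_dist_add_one_of_adj v h.adj with h1 | h1 <;> omega
        have := aux k _ _ h1
        omega
      rw [farther hT h9.symm h2 h3 this, h4]

/-- a token chain can be executed in any colouring that agrees with `c` behind the token -/
lemma Reach.exec (hT : G.IsTree) {c : V → Fin 4} {v v₀ : V} {R : ℕ} {k : ℕ} {a b : V}
    (h : Reach G c v k a b) (hR : G.dist v₀ v + k ≤ R + 1) (g : V → Fin 4)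
    (hg : ∀ y, G.dist y a < G.dist y b ∨ y = b → g y = c y) :
    ∃ g' : V → Fin 4, (∀ y, ¬ G.dist y a < G.dist y b → g' y = g y) ∧
      (∀ y, R < G.dist v₀ y → g' y = g y) ∧ g' a = c b ∧ En G g' v₀ R ≤ En G g v₀ R := by
  classical
  induction k generalizing a b with
  | zero =>
    obtain ⟨rfl, h1, h2⟩ := h
    refine ⟨g, fun _ _ => rfl, fun _ _ => rfl, ?_, le_rfl⟩
    rw [hg a (Or.inl ?_), h2]
    rw [SimpleGraph.dist_self, SimpleGraph.dist_eq_one_iff_adj.2 h1]; norm_num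
  | succ k ih =>
    obtain ⟨x, h1, h2, h3, h4, h5⟩ := h
    have hx := h1.adj
    -- sides
    have side : ∀ y, G.dist y x < G.dist y a → G.dist y a < G.dist y b := by
      intro y hy
      rw [farther hT hx.symm h2 h3 hy]; omega
    have hab : G.dist a a < G.dist a b := by
      rw [SimpleGraph.dist_self, SimpleGraph.dist_eq_one_iff_adj.2 h2]; norm_num
    obtain ⟨g1, m1, m2, m3, m4⟩ := ih h1 (by omega) (by
      intro y hy
      apply hg
      rcases hy with hy | rfl
      · exact Or.inl (side y hy)
      · exact Or.inl hab)
    have nb : ∀ y, G.Adj a y → y ≠ x → g1 y = c y := by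
      intro y hy hyx
      have e1 : ¬ G.dist y x < G.dist y a := by
        intro hlt
        rw [SimpleGraph.dist_eq_one_iff_adj.2 hy.symm] at hlt
        have : G.dist y x = 0 := by omega
        exact hyx (hT.connected.dist_eq_zero_iff.1 this)
      rw [m1 y e1]
      apply hg
      by_cases hyb : y = b
      · exact Or.inr hyb
      · left
        have e2 : G.dist y y < G.dist y a := by
          rw [SimpleGraph.dist_self, SimpleGraph.dist_eq_one_iff_adj.2 hy.symm]; norm_num
        rw [farther hT hy h2 (Ne.symm hyb) e2]; omega
    have ga : g1 a = c a := by
      rw [m1 a (by rw [SimpleGraph.dist_self]; omega)]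
      exact hg a (Or.inl hab)
    refine ⟨Function.update g1 a (c b), ?_, ?_, ?_, ?_⟩
    · intro y hy
      rw [Function.update_of_ne (by rintro rfl; exact hy hab)]
      exact m1 y (fun h => hy (side y h))
    · intro y hy
      have hd : G.dist v₀ a ≤ R := by
        have := hT.connected.dist_triangle (u := v₀) (v := v) (w := a)
        have := h1.dist hT
        omega
      rw [Function.update_of_ne (by rintro rfl; omega), m2 y hy]
    · rw [Function.update_self]
    · have hd : G.dist v₀ a ≤ R := by
        have := hT.connected.dist_triangle (u := v₀) (v := v) (w := a)
        have := h1.dist hT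
        omega
      have e := En_update hT g1 v₀ a R hd (c b)
      have e1 : 1 ≤ nc G g1 a (g1 a) := by
        unfold nc
        apply Finset.card_pos.2
        refine ⟨x, ?_⟩
        simp [hx.symm, m3, ga]
      have e2 : nc G g1 a (c b) ≤ 1 := by
        unfold nc
        apply Finset.card_le_one.2
        have : ∀ y ∈ (G.neighborFinset a).filter (fun y => g1 y = c b), y = b := by
          intro y hy
          simp only [Finset.mem_filter, SimpleGraph.mem_neighborFinset] at hy
          have hyx : y ≠ x := by
            rintro rfl
            rw [m3] at hy
            exact h4 hy.2.symm
          exact h5 y hy.1 hyx (by rw [← nb y hy.1 hyx, hy.2])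
        intro p hp q hq
        rw [this p hp, this q hq]
      omega

lemma Reach.extend (hT : G.IsTree) (hdeg : ∀ v, G.degree v = 6) {c : V → Fin 4} {v : V} {R k : ℕ}
    {a b : V} (hI : ¬ Imp G c v R) (h : Reach G c v k a b) (hk : k ≤ R) :
    ∃ b', Reach G c v (k + 1) b b' := by
  classical
  obtain ⟨g, m1, m2, m3, m4⟩ := h.exec hT (v₀ := v) (R := R) (by simp; omega) c (fun _ _ => rfl)
  have hb : G.dist v b ≤ R := by rw [h.dist hT]; exact hk
  have hmin := fun k => local_min hT hI m2 m4 hb k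
  have hgb : g b = c b := m1 b (by rw [SimpleGraph.dist_self]; omega)
  have e1 : 1 ≤ nc G g b (g b) := by
    unfold nc
    apply Finset.card_pos.2
    refine ⟨a, ?_⟩
    simp [h.adj.symm, m3, hgb]
  have hsum := sum_nc (G := G) g b
  rw [hdeg] at hsum
  have : ∃ k, k ≠ g b ∧ nc G g b k ≤ 1 := by
    by_contra! hcon
    have h2 : ∀ k, k ≠ g b → 2 ≤ nc G g b k := fun k hk => hcon k hk
    have hge : 7 ≤ ∑ k, nc G g b k := by
      have : ∑ k : Fin 4, (if k = g b then 1 else 2) ≤ ∑ k, nc G g b k := by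
        apply Finset.sum_le_sum
        intro k _
        split_ifs with hk
        · rw [hk]; exact e1
        · exact h2 k hk
      refine le_trans ?_ this
      generalize g b = z
      revert z; decide
    omega
  obtain ⟨k', hk1, hk2⟩ := this
  have hk3 : nc G g b k' = 1 := le_antisymm hk2 (e1.trans (hmin k'))
  unfold nc at hk3
  obtain ⟨b', hb'⟩ := Finset.card_eq_one.1 hk3
  have hmem : ∀ y, (G.Adj b y ∧ g y = k') ↔ y = b' := by
    intro y
    have : y ∈ (G.neighborFinset b).filter (fun y => g y = k') ↔ y ∈ ({b'} : Finset V) := by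
      rw [hb']
    simpa using this
  have hb1 := (hmem b').2 rfl
  have nb : ∀ y, G.Adj b y → y ≠ a → g y = c y := by
    intro y hy hyx
    apply m1
    intro hlt
    rw [SimpleGraph.dist_eq_one_iff_adj.2 hy.symm] at hlt
    have : G.dist y a = 0 := by omega
    exact hyx (hT.connected.dist_eq_zero_iff.1 this)
  have hb'a : b' ≠ a := by
    rintro rfl
    rw [m3] at hb1
    exact hk1 (by rw [← hb1.2, hgb])
  have hcb : c b' = k' := by rw [← nb b' hb1.1 hb'a, hb1.2]
  refine ⟨b', a, h, hb1.1, hb'a, ?_, ?_⟩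
  · rw [hcb, ← hgb]; exact hk1
  · intro y hy hya hc
    apply (hmem y).1 ⟨hy, ?_⟩
    rw [nb y hy hya, hc, hcb]

lemma Reach.no_meet (hT : G.IsTree) (hdeg : ∀ v, G.degree v = 6) {c : V → Fin 4} {v₁ v₂ : V}
    {R k₁ k₂ : ℕ} {a₁ a₂ w : V} (hI : ¬ Imp G c v₁ R) (h₁ : Reach G c v₁ k₁ a₁ w)
    (h₂ : Reach G c v₂ k₂ a₂ w) (hR : k₁ + 2 * k₂ ≤ R) : a₁ = a₂ := by
  classical
  by_contra hne
  have d1 := h₁.dist hT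
  have d2 := h₂.dist hT
  have d3 : G.dist v₁ v₂ ≤ k₁ + k₂ := by
    have := hT.connected.dist_triangle (u := v₁) (v := w) (w := v₂)
    rw [SimpleGraph.dist_comm (u := w)] at this
    omega
  obtain ⟨g, m1, m2, m3, m4⟩ := h₁.exec hT (v₀ := v₁) (R := R) (by simp; omega) c (fun _ _ => rfl)
  have sep : ∀ y, G.dist y a₂ < G.dist y w → ¬ G.dist y a₁ < G.dist y w := by
    intro y h2 h1
    exact hne (closer_unique hT h₁.adj.symm h₂.adj.symm h1 h2)
  obtain ⟨g', n1, n2, n3, n4⟩ := h₂.exec hT (v₀ := v₁) (R := R) (by omega) g (by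
    rintro y (hy | rfl)
    · exact m1 y (sep y hy)
    · exact m1 y (by rw [SimpleGraph.dist_self]; omega))
  have hw : G.dist v₁ w ≤ R := by omega
  have hmin := fun k => local_min hT hI (h := g') (fun y hy => by rw [n2 y hy, m2 y hy])
    (n4.trans m4) hw k
  have gw : g' w = c w := by
    rw [n1 w (by rw [SimpleGraph.dist_self]; omega), m1 w (by rw [SimpleGraph.dist_self]; omega)]
  have ga1 : g' a₁ = c w := by
    rw [n1 a₁, m3]
    intro h
    apply sep _ h
    rw [SimpleGraph.dist_self, SimpleGraph.dist_eq_one_iff_adj.2 h₁.adj]; norm_num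
  have e1 : 2 ≤ nc G g' w (g' w) := by
    unfold nc
    rw [← Finset.card_pair hne]
    apply Finset.card_le_card
    intro y hy
    simp only [Finset.mem_insert, Finset.mem_singleton] at hy
    rcases hy with rfl | rfl
    · simp [h₁.adj.symm, ga1, gw]
    · simp [h₂.adj.symm, n3, gw]
  have hsum := sum_nc (G := G) g' w
  rw [hdeg] at hsum
  have : ∑ k : Fin 4, 2 ≤ ∑ k, nc G g' w k :=
    Finset.sum_le_sum (fun k _ => e1.trans (hmin k))
  simp at this
  omega

lemma Reach.unique (hT : G.IsTree) (hdeg : ∀ v, G.degree v = 6) {c : V → Fin 4} {v₁ v₂ : V}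
    {R k₁ k₂ : ℕ} {a₁ a₂ w : V} (hI : ¬ Imp G c v₁ R) (h₁ : Reach G c v₁ k₁ a₁ w)
    (h₂ : Reach G c v₂ k₂ a₂ w) (hR : k₁ + 2 * k₂ ≤ R) : v₁ = v₂ := by
  induction k₁ generalizing k₂ a₁ a₂ w with
  | zero =>
    have ha := Reach.no_meet hT hdeg hI h₁ h₂ hR
    subst ha
    obtain ⟨rfl, h3, h4⟩ := h₁
    cases k₂ with
    | zero => exact h₂.1
    | succ k₂ =>
      obtain ⟨x, _, _, _, h5, _⟩ := h₂
      exact absurd h4.symm h5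
  | succ k₁ ih =>
    have ha := Reach.no_meet hT hdeg hI h₁ h₂ hR
    subst ha
    obtain ⟨x, h6, _, _, h5, _⟩ := h₁
    cases k₂ with
    | zero =>
      obtain ⟨rfl, _, h4⟩ := h₂
      exact absurd h4.symm h5
    | succ k₂ =>
      obtain ⟨x', h7, _⟩ := h₂
      exact ih h6 h7 (by omega)

/-- `w` is hit by a chain from `v` of length at most `n` -/
def Hit (G : SimpleGraph V) (c : V → Fin 4) (v : V) (n : ℕ) (w : V) : Prop :=
  ∃ k, k ≤ n ∧ ∃ a, Reach G c v k a w

open Classical in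
lemma card_hit (hT : G.IsTree) (hdeg : ∀ v, G.degree v = 6) {c : V → Fin 4} {v : V} {n : ℕ}
    (hI : ¬ Imp G c v (3 * n)) (hc : 0 < cd G c v) :
    n + 1 ≤ ((bl G n v).filter (fun w => Hit G c v n w)).card := by
  have hex : ∀ k, k ≤ n → ∃ a b, Reach G c v k a b := by
    intro k
    induction k with
    | zero =>
      intro _
      unfold cd nc at hc
      obtain ⟨a, ha⟩ := Finset.card_pos.1 hc
      simp only [Finset.mem_filter, SimpleGraph.mem_neighborFinset] at ha
      exact ⟨a, v, rfl, ha.1.symm, ha.2⟩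
    | succ k ih =>
      intro hk
      obtain ⟨a, b, h⟩ := ih (by omega)
      obtain ⟨b', h'⟩ := h.extend hT hdeg hI (by omega)
      exact ⟨b, b', h'⟩
  have hsurj : (Finset.range (n + 1)) ⊆
      ((bl G n v).filter (fun w => Hit G c v n w)).image (fun w => G.dist v w) := by
    intro k hk
    rw [Finset.mem_range] at hk
    obtain ⟨a, b, h⟩ := hex k (by omega)
    rw [Finset.mem_image]
    refine ⟨b, ?_, h.dist hT⟩
    rw [Finset.mem_filter, mem_bl hT, h.dist hT]
    exact ⟨by omega, k, by omega, a, h⟩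
  have := (Finset.card_le_card hsurj).trans Finset.card_image_le
  rwa [Finset.card_range] at this

lemma hit_unique (hT : G.IsTree) (hdeg : ∀ v, G.degree v = 6) {c : V → Fin 4} {v₁ v₂ w : V} {n : ℕ}
    (hI : ¬ Imp G c v₁ (3 * n)) (h1 : Hit G c v₁ n w) (h2 : Hit G c v₂ n w) : v₁ = v₂ := by
  obtain ⟨k₁, hk₁, a₁, h1⟩ := h1
  obtain ⟨k₂, hk₂, a₂, h2⟩ := h2
  exact Reach.unique hT hdeg hI h1 h2 (by omega)

end Comb

section New

variable {V : Type} (G : SimpleGraph V) [G.LocallyFinite]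

open Classical in
/-- replace `c` by `q` in a ball -/
noncomputable def pr (c q : V → Fin 4) (v : V) (R : ℕ) (y : V) : Fin 4 :=
  if G.dist v y ≤ R then q y else c y

/-- `v` is an isolated marked vertex at which the proposal `q` improves `c` -/
def Act (c q : V → Fin 4) (m : V → Bool) (R : ℕ) (v : V) : Prop :=
  m v = true ∧ (∀ u, u ≠ v → G.dist v u ≤ 2 * R + 3 → m u = false) ∧
    En G (pr G c q v R) v R < En G c v R

open Classical in
/-- the new colouring -/
noncomputable def nw (c q : V → Fin 4) (m : V → Bool) (R : ℕ) (y : V) : Fin 4 :=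
  if ∃ v, Act G c q m R v ∧ G.dist v y ≤ R then q y else c y

variable {G}

lemma Act.unique (hT : G.IsTree) {c q : V → Fin 4} {m : V → Bool} {R : ℕ} {v v' y : V}
    (h : Act G c q m R v) (h' : Act G c q m R v') {i j : ℕ} (hd : G.dist v y ≤ i)
    (hd' : G.dist v' y ≤ j) (hij : i + j ≤ 2 * R + 3) : v' = v := by
  by_contra hne
  have := hT.connected.dist_triangle (u := v) (v := y) (w := v')
  rw [SimpleGraph.dist_comm (u := y)] at this
  have h1 := h.2.1 v' hne (by omega)
  rw [h'.1] at h1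
  exact absurd h1 (by decide)

lemma nw_near (hT : G.IsTree) {c q : V → Fin 4} {m : V → Bool} {R : ℕ} {v y : V}
    (h : Act G c q m R v) (hy : G.dist v y ≤ R + 2) : nw G c q m R y = pr G c q v R y := by
  unfold nw pr
  by_cases hd : G.dist v y ≤ R
  · rw [if_pos hd, if_pos ⟨v, h, hd⟩]
  · rw [if_neg hd, if_neg]
    rintro ⟨v', h', hd'⟩
    have := h.unique hT h' hy hd' (by omega)
    subst this
    exact hd hd'

lemma cd_nw_near (hT : G.IsTree) {c q : V → Fin 4} {m : V → Bool} {R : ℕ} {v w : V}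
    (h : Act G c q m R v) (hw : G.dist v w ≤ R + 1) :
    cd G (nw G c q m R) w = cd G (pr G c q v R) w := by
  apply cd_congr
  · exact nw_near hT h (by omega)
  · intro y hy
    apply nw_near hT h
    rcases hT.dist_eq_dist_add_one_of_adj v hy with h1 | h1 <;> omega

lemma cd_nw_far (hT : G.IsTree) {c q : V → Fin 4} {m : V → Bool} {R : ℕ} {w : V}
    (h : ∀ v, Act G c q m R v → ¬ G.dist v w ≤ R + 1) :
    cd G (nw G c q m R) w = cd G c w := by
  apply cd_congr
  · unfold nw
    rw [if_neg]
    rintro ⟨v, hv, hd⟩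
    exact h v hv (by omega)
  · intro y hy
    unfold nw
    rw [if_neg]
    rintro ⟨v, hv, hd⟩
    apply h v hv
    rcases hT.dist_eq_dist_add_one_of_adj v hy with h1 | h1 <;> omega

open Classical in
/-- transported change of energy -/
noncomputable def Fl (G : SimpleGraph V) [G.LocallyFinite] (c q : V → Fin 4) (m : V → Bool) (R : ℕ)
    (v w : V) : ℝ :=
  if Act G c q m R v ∧ G.dist v w ≤ R + 1 then
    (cd G (nw G c q m R) w : ℝ) - (cd G c w : ℝ) else 0

open Classical in
lemma Fl_out (hT : G.IsTree) (c q : V → Fin 4) (m : V → Bool) (R : ℕ) (v : V) :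
    ∑ w ∈ bl G (R + 1) v, Fl G c q m R v w ≤ if Act G c q m R v then -1 else 0 := by
  split_ifs with h
  · have h1 : ∑ w ∈ bl G (R + 1) v, Fl G c q m R v w =
        ∑ w ∈ bl G (R + 1) v, ((cd G (pr G c q v R) w : ℝ) - (cd G c w : ℝ)) := by
      apply Finset.sum_congr rfl
      intro w hw
      rw [mem_bl hT] at hw
      unfold Fl
      rw [if_pos ⟨h, hw⟩, cd_nw_near hT h hw]
    rw [h1, Finset.sum_sub_distrib]
    have h2 := h.2.2
    unfold En at h2
    have h3 : ((∑ w ∈ bl G (R + 1) v, cd G (pr G c q v R) w : ℕ) : ℝ) + 1 ≤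
      ((∑ w ∈ bl G (R + 1) v, cd G c w : ℕ) : ℝ) := by exact_mod_cast h2
    push_cast at h3
    linarith
  · apply le_of_eq
    apply Finset.sum_eq_zero
    intro w _
    unfold Fl
    rw [if_neg (fun h' => h h'.1)]

lemma Fl_in (hT : G.IsTree) (c q : V → Fin 4) (m : V → Bool) (R : ℕ) (w : V) :
    ∑ v ∈ bl G (R + 1) w, Fl G c q m R v w = (cd G (nw G c q m R) w : ℝ) - (cd G c w : ℝ) := by
  classical
  by_cases h : ∃ v, Act G c q m R v ∧ G.dist v w ≤ R + 1
  · obtain ⟨v, h1, h2⟩ := h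
    rw [Finset.sum_eq_single v]
    · unfold Fl; rw [if_pos ⟨h1, h2⟩]
    · intro v' _ hne
      unfold Fl
      rw [if_neg]
      rintro ⟨h3, h4⟩
      exact hne (h1.unique hT h3 h2 h4 (by omega))
    · intro hn
      rw [mem_bl hT, SimpleGraph.dist_comm] at hn
      exact absurd h2 hn
  · push Not at h
    rw [cd_nw_far hT (fun v hv hd => by have := h v hv; omega), sub_self]
    apply Finset.sum_eq_zero
    intro v _
    unfold Fl
    rw [if_neg]
    rintro ⟨h1, h2⟩
    have := h v h1; omega

/-! equivariance -/

lemma dist_symm_iso (φ : G ≃g G) (u v : V) : G.dist (φ.symm u) v = G.dist u (φ v) := by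
  rw [← dist_iso φ (φ.symm u) v]; simp

lemma nc_equiv (φ : G ≃g G) (c : V → Fin 4) (v : V) (k : Fin 4) :
    nc G (fun u => c (φ.symm u)) v k = nc G c (φ.symm v) k := by
  classical
  unfold nc
  apply Finset.card_nbij' (fun y => φ.symm y) (fun y => φ y)
  · intro y hy
    simp only [Finset.coe_filter, SimpleGraph.mem_neighborFinset, Set.mem_ofPred_eq] at hy ⊢
    exact ⟨φ.symm.map_rel_iff.2 hy.1, hy.2⟩
  · intro y hy
    simp only [Finset.coe_filter, SimpleGraph.mem_neighborFinset, Set.mem_ofPred_eq] at hy ⊢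
    refine ⟨?_, by simpa using hy.2⟩
    have := φ.map_rel_iff.2 hy.1
    simpa using this
  · intro y _; simp
  · intro y _; simp

lemma cd_equiv (φ : G ≃g G) (c : V → Fin 4) (v : V) :
    cd G (fun u => c (φ.symm u)) v = cd G c (φ.symm v) := nc_equiv φ c v _

lemma sum_bl_equiv {M : Type*} [AddCommMonoid M] (hT : G.IsTree) (φ : G ≃g G) (n : ℕ) (v : V)
    (f : V → M) : ∑ w ∈ bl G n v, f (φ.symm w) = ∑ w ∈ bl G n (φ.symm v), f w := by
  apply Finset.sum_nbij' (fun y => φ.symm y) (fun y => φ y)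
  · intro y hy
    rw [mem_bl hT] at hy ⊢
    rwa [dist_iso φ.symm]
  · intro y hy
    rw [mem_bl hT] at hy ⊢
    rwa [← dist_symm_iso]
  · intro y _; simp
  · intro y _; simp
  · intro y _; rfl

lemma En_equiv (hT : G.IsTree) (φ : G ≃g G) (c : V → Fin 4) (v : V) (R : ℕ) :
    En G (fun u => c (φ.symm u)) v R = En G c (φ.symm v) R := by
  unfold En
  rw [← sum_bl_equiv hT]
  exact Finset.sum_congr rfl (fun w _ => cd_equiv φ c w)

lemma Imp_equiv_aux (hT : G.IsTree) (φ : G ≃g G) (c : V → Fin 4) (v : V) (R : ℕ)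
    (h : Imp G c (φ.symm v) R) : Imp G (fun u => c (φ.symm u)) v R := by
  obtain ⟨g, h1, h2⟩ := h
  refine ⟨fun u => g (φ.symm u), ?_, ?_⟩
  · intro y hy
    apply h1
    rwa [dist_iso φ.symm]
  · rwa [En_equiv hT, En_equiv hT]

lemma Imp_equiv (hT : G.IsTree) (φ : G ≃g G) (c : V → Fin 4) (v : V) (R : ℕ) :
    Imp G (fun u => c (φ.symm u)) v R ↔ Imp G c (φ.symm v) R := by
  refine ⟨fun h => ?_, Imp_equiv_aux hT φ c v R⟩
  have := Imp_equiv_aux hT φ.symm (fun u => c (φ.symm u)) (φ.symm v) R (by simpa using h)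
  simpa using this

omit [G.LocallyFinite] in
lemma Reach_equiv_aux (φ : G ≃g G) (c : V → Fin 4) (v : V) (k : ℕ) (a b : V)
    (h : Reach G c (φ.symm v) k (φ.symm a) (φ.symm b)) :
    Reach G (fun u => c (φ.symm u)) v k a b := by
  induction k generalizing a b with
  | zero =>
    obtain ⟨h1, h2, h3⟩ := h
    exact ⟨φ.symm.injective h1, φ.symm.map_rel_iff.1 h2, h3⟩
  | succ k ih =>
    obtain ⟨x, h1, h2, h3, h4, h5⟩ := h
    refine ⟨φ x, ih _ _ (by simpa using h1), φ.symm.map_rel_iff.1 h2, ?_, h4, ?_⟩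
    · rintro rfl; simp at h3
    · intro y hy hx hc
      apply φ.symm.injective
      apply h5 _ (φ.symm.map_rel_iff.2 hy) _ hc
      rintro rfl; simp at hx

omit [G.LocallyFinite] in
lemma Hit_equiv_aux (φ : G ≃g G) (c : V → Fin 4) (v : V) (n : ℕ) (w : V)
    (h : Hit G c (φ.symm v) n (φ.symm w)) : Hit G (fun u => c (φ.symm u)) v n w := by
  obtain ⟨k, hk, a, h⟩ := h
  exact ⟨k, hk, φ a, Reach_equiv_aux φ c v k _ _ (by simpa using h)⟩

omit [G.LocallyFinite] in
lemma Hit_equiv (φ : G ≃g G) (c : V → Fin 4) (v : V) (n : ℕ) (w : V) :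
    Hit G (fun u => c (φ.symm u)) v n w ↔ Hit G c (φ.symm v) n (φ.symm w) := by
  refine ⟨fun h => ?_, Hit_equiv_aux φ c v n w⟩
  have := Hit_equiv_aux φ.symm (fun u => c (φ.symm u)) (φ.symm v) n (φ.symm w) (by simpa using h)
  simpa using this

lemma pr_equiv (φ : G ≃g G) (c q : V → Fin 4) (v : V) (R : ℕ) :
    pr G (fun u => c (φ.symm u)) (fun u => q (φ.symm u)) v R =
      fun u => pr G c q (φ.symm v) R (φ.symm u) := by
  funext y
  unfold pr
  rw [dist_iso φ.symm]

lemma Act_equiv_aux (hT : G.IsTree) (φ : G ≃g G) (c q : V → Fin 4) (m : V → Bool) (R : ℕ) (v : V)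
    (h : Act G c q m R (φ.symm v)) :
    Act G (fun u => c (φ.symm u)) (fun u => q (φ.symm u)) (fun u => m (φ.symm u)) R v := by
  obtain ⟨h1, h2, h3⟩ := h
  refine ⟨h1, ?_, ?_⟩
  · intro u hu hd
    apply h2
    · exact fun h => hu (φ.symm.injective h)
    · rwa [dist_iso φ.symm]
  · rw [pr_equiv, En_equiv hT, En_equiv hT]
    exact h3

lemma Act_equiv (hT : G.IsTree) (φ : G ≃g G) (c q : V → Fin 4) (m : V → Bool) (R : ℕ) (v : V) :
    Act G (fun u => c (φ.symm u)) (fun u => q (φ.symm u)) (fun u => m (φ.symm u)) R v ↔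
      Act G c q m R (φ.symm v) := by
  refine ⟨fun h => ?_, Act_equiv_aux hT φ c q m R v⟩
  have := Act_equiv_aux hT φ.symm (fun u => c (φ.symm u)) (fun u => q (φ.symm u))
    (fun u => m (φ.symm u)) R (φ.symm v) (by simpa using h)
  simpa using this

lemma nw_equiv (hT : G.IsTree) (φ : G ≃g G) (c q : V → Fin 4) (m : V → Bool) (R : ℕ) :
    nw G (fun u => c (φ.symm u)) (fun u => q (φ.symm u)) (fun u => m (φ.symm u)) R =
      fun y => nw G c q m R (φ.symm y) := by
  funext y
  unfold nw
  have : (∃ v, Act G (fun u => c (φ.symm u)) (fun u => q (φ.symm u)) (fun u => m (φ.symm u)) R v ∧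
      G.dist v y ≤ R) ↔ ∃ v, Act G c q m R v ∧ G.dist v (φ.symm y) ≤ R := by
    constructor
    · rintro ⟨v, h, hd⟩
      exact ⟨φ.symm v, (Act_equiv hT φ c q m R v).1 h, by rwa [dist_iso φ.symm]⟩
    · rintro ⟨v, h, hd⟩
      refine ⟨φ v, (Act_equiv hT φ c q m R _).2 (by simpa using h), ?_⟩
      rw [← dist_iso φ.symm]; simpa using hd
  by_cases h : ∃ v, Act G c q m R v ∧ G.dist v (φ.symm y) ≤ R
  · rw [if_pos h, if_pos (this.2 h)]
  · rw [if_neg h, if_neg (fun h' => h (this.1 h'))]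

lemma Fl_equiv (hT : G.IsTree) (φ : G ≃g G) (c q : V → Fin 4) (m : V → Bool) (R : ℕ) (v w : V) :
    Fl G (fun u => c (φ.symm u)) (fun u => q (φ.symm u)) (fun u => m (φ.symm u)) R v w =
      Fl G c q m R (φ.symm v) (φ.symm w) := by
  unfold Fl
  rw [nw_equiv hT, cd_equiv φ c w, cd_equiv φ (nw G c q m R) w]
  have h1 := Act_equiv hT φ c q m R v
  have h2 := dist_iso φ.symm v w
  by_cases h : Act G c q m R (φ.symm v) ∧ G.dist (φ.symm v) (φ.symm w) ≤ R + 1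
  · rw [if_pos h, if_pos ⟨h1.2 h.1, h2 ▸ h.2⟩]
  · rw [if_neg h, if_neg (fun h' => h ⟨h1.1 h'.1, h2.symm ▸ h'.2⟩)]

/-! measurability -/

variable {X : Type} [MeasurableSpace X]

lemma meas_cd {c : X → V → Fin 4} (hc : ∀ y, Measurable (fun x => c x y)) (w : V) :
    Measurable (fun x => cd G (c x) w) := by
  classical
  unfold cd
  simp only [nc_eq_sum]
  apply Finset.measurable_sum
  intro y _
  exact Measurable.ite (measurableSet_eq_fun (hc y) (hc w)) measurable_const measurable_const

lemma meas_En {c : X → V → Fin 4} (hc : ∀ y, Measurable (fun x => c x y)) (v : V) (R : ℕ) :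
    Measurable (fun x => En G (c x) v R) := by
  unfold En
  exact Finset.measurable_sum _ (fun w _ => meas_cd hc w)

lemma meas_pr {c q : X → V → Fin 4} (hc : ∀ y, Measurable (fun x => c x y))
    (hq : ∀ y, Measurable (fun x => q x y)) (v : V) (R : ℕ) (y : V) :
    Measurable (fun x => pr G (c x) (q x) v R y) := by
  unfold pr
  split_ifs
  · exact hq y
  · exact hc y

lemma meas_Act [Countable V] {c q : X → V → Fin 4} {m : X → V → Bool}
    (hc : ∀ y, Measurable (fun x => c x y))
    (hq : ∀ y, Measurable (fun x => q x y)) (hm : ∀ y, Measurable (fun x => m x y)) (R : ℕ)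
    (v : V) : MeasurableSet {x | Act G (c x) (q x) (m x) R v} := by
  unfold Act
  refine MeasurableSet.inter (hm v (measurableSet_singleton true)) (MeasurableSet.inter ?_ ?_)
  · change MeasurableSet {x | ∀ u, u ≠ v → G.dist v u ≤ 2 * R + 3 → m x u = false}
    simp only [Set.ofPred_forall]
    refine MeasurableSet.iInter fun u => MeasurableSet.iInter fun _ => MeasurableSet.iInter fun _ =>
      hm u (measurableSet_singleton false)
  · exact measurableSet_lt (meas_En (meas_pr hc hq v R) v R) (meas_En hc v R)

lemma meas_nw [Countable V] {c q : X → V → Fin 4} {m : X → V → Bool}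
    (hc : ∀ y, Measurable (fun x => c x y))
    (hq : ∀ y, Measurable (fun x => q x y)) (hm : ∀ y, Measurable (fun x => m x y)) (R : ℕ)
    (y : V) : Measurable (fun x => nw G (c x) (q x) (m x) R y) := by
  classical
  unfold nw
  refine Measurable.ite ?_ (hq y) (hc y)
  simp only [Set.ofPred_exists]
  refine MeasurableSet.iUnion fun v => ?_
  exact (meas_Act hc hq hm R v).inter (MeasurableSet.const _)

lemma meas_Fl [Countable V] {c q : X → V → Fin 4} {m : X → V → Bool}
    (hc : ∀ y, Measurable (fun x => c x y))
    (hq : ∀ y, Measurable (fun x => q x y)) (hm : ∀ y, Measurable (fun x => m x y)) (R : ℕ)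
    (v w : V) : Measurable (fun x => Fl G (c x) (q x) (m x) R v w) := by
  classical
  unfold Fl
  refine Measurable.ite ((meas_Act hc hq hm R v).inter (MeasurableSet.const _)) ?_ measurable_const
  exact ((measurable_from_top (f := fun n : ℕ => (n : ℝ))).comp
      (meas_cd (meas_nw hc hq hm R) w)).sub
    ((measurable_from_top (f := fun n : ℕ => (n : ℝ))).comp (meas_cd hc w))

open Classical in
lemma Imp_iff (hT : G.IsTree) (c : V → Fin 4) (v : V) (R : ℕ) : Imp G c v R ↔
    ∃ q : bl G R v → Fin 4,
      En G (fun y => if h : y ∈ bl G R v then q ⟨y, h⟩ else c y) v R < En G c v R := by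
  constructor
  · rintro ⟨g, h1, h2⟩
    refine ⟨fun y => g y, ?_⟩
    convert h2 using 2
    funext y
    split_ifs with h
    · rfl
    · rw [mem_bl hT] at h
      rw [h1 y (by omega)]
  · rintro ⟨q, h⟩
    refine ⟨_, ?_, h⟩
    intro y hy
    rw [dif_neg]
    rw [mem_bl hT]; omega

lemma meas_Imp (hT : G.IsTree) {c : X → V → Fin 4}
    (hc : ∀ y, Measurable (fun x => c x y)) (v : V) (R : ℕ) :
    MeasurableSet {x | Imp G (c x) v R} := by
  classical
  simp only [Imp_iff hT, Set.ofPred_exists]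
  refine MeasurableSet.iUnion fun q => measurableSet_lt (meas_En ?_ v R) (meas_En hc v R)
  intro y
  split_ifs
  · exact measurable_const
  · exact hc y

omit [G.LocallyFinite] in
lemma meas_Hit [Countable V] {c : X → V → Fin 4}
    (hc : ∀ y, Measurable (fun x => c x y)) (v : V) (n : ℕ) (w : V) :
    MeasurableSet {x | Hit G (c x) v n w} := by
  have hR : ∀ k a b, MeasurableSet {x | Reach G (c x) v k a b} := by
    intro k
    induction k with
    | zero =>
      intro a b
      exact (MeasurableSet.const _).inter
        ((MeasurableSet.const _).inter (measurableSet_eq_fun (hc a) (hc v)))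
    | succ k ih =>
      intro b b'
      simp only [Reach, Set.ofPred_exists]
      refine MeasurableSet.iUnion fun a => (ih a b).inter ((MeasurableSet.const _).inter
        ((MeasurableSet.const _).inter (MeasurableSet.inter ?_ ?_)))
      · exact (measurableSet_eq_fun (hc b') (hc b)).compl
      · change MeasurableSet {x | ∀ y, G.Adj b y → y ≠ a → c x y = c x b' → y = b'}
        simp only [Set.ofPred_forall]
        refine MeasurableSet.iInter fun y => MeasurableSet.iInter fun _ => MeasurableSet.iInter
          fun _ => ?_
        by_cases hy : y = b'
        · simp [hy]
        · simp only [hy, imp_false]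
          exact (measurableSet_eq_fun (hc y) (hc b')).compl
  unfold Hit
  simp only [Set.ofPred_exists]
  refine MeasurableSet.iUnion fun k => (MeasurableSet.const _).inter ?_
  change MeasurableSet {x | ∃ a, Reach G (c x) v k a w}
  simp only [Set.ofPred_exists]
  exact MeasurableSet.iUnion fun a => hR k a w

end New

section Meas

/-- uniform measure on the unit interval -/
noncomputable def lam : Measure ℝ := volume.restrict (Set.Icc (0:ℝ) 1)

instance : IsProbabilityMeasure lam := ⟨by simp [lam]⟩

lemma exists_map (Y : Type) [MeasurableSpace Y] [StandardBorelSpace Y] [Nonempty Y]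
    (ν : Measure Y) [IsProbabilityMeasure ν] : ∃ f : ℝ → Y, Measurable f ∧ lam.map f = ν := by
  obtain ⟨f, hf, hm⟩ := ν.exists_measurable_map_eq
  have h1 : (volume : Measure unitInterval).map (Subtype.val) = lam := by
    exact map_comap_subtype_coe measurableSet_Icc _
  have hp : Measurable (fun x : ℝ => f (Set.projIcc 0 1 zero_le_one x)) :=
    hf.comp continuous_projIcc.measurable
  refine ⟨_, hp, ?_⟩
  rw [← h1, Measure.map_map hp (by fun_prop), ← hm]
  congr 1
  funext x
  simp

variable {V : Type}

/-- the product measure -/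
noncomputable def mu (V : Type) : Measure (V → ℝ) := Measure.infinitePi (fun _ : V => lam)

instance : IsProbabilityMeasure (mu V) := by unfold mu; infer_instance

lemma eq_mu (μ : Measure (V → ℝ)) [IsProbabilityMeasure μ]
    (hμ : ∀ s : Finset V, Measure.map (fun (x : V → ℝ) (v : s) => x v) μ
        = Measure.pi (fun _ : s => volume.restrict (Set.Icc (0:ℝ) 1))) : μ = mu V := by
  have h2 : IsProjectiveLimit (mu V) (fun I : Finset V => Measure.pi (fun _ : I => lam)) :=
    Measure.isProjectiveLimit_infinitePi (fun _ : V => lam)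
  have h1 : IsProjectiveLimit μ (fun I : Finset V => Measure.pi (fun _ : I => lam)) := fun s => hμ s
  exact h1.unique h2

lemma mu_inv (e : V ≃ V) : (mu V).map (fun x u => x (e.symm u)) = mu V := by
  have := Measure.infinitePi_map_piCongrLeft (fun _ : V => lam) e
  unfold mu
  convert this using 2
  funext x u
  simp [MeasurableEquiv.coe_piCongrLeft, Equiv.piCongrLeft_apply]

lemma exists_split : ∃ t₁ t₂ : ℝ → ℝ, Measurable t₁ ∧ Measurable t₂ ∧
    ∀ V : Type, (mu V).map (fun x => ((fun v => t₁ (x v)), (fun v => t₂ (x v)))) =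
      (mu V).prod (mu V) := by
  obtain ⟨T, hT, hm⟩ := exists_map (Fin 2 → ℝ) (Measure.infinitePi (fun _ : Fin 2 => lam))
  refine ⟨fun x => T x 0, fun x => T x 1, by fun_prop, by fun_prop, fun V => ?_⟩
  have e1 : (mu V).map (fun x v => T (x v)) =
      Measure.infinitePi (fun _ : V => Measure.infinitePi (fun _ : Fin 2 => lam)) := by
    unfold mu
    rw [Measure.infinitePi_map_pi (fun _ : V => lam) (fun _ => hT), hm]
  have e2 := Measure.infinitePi_map_curry_symm (fun (_ : V) (_ : Fin 2) => lam)
  have e3 := Measure.infinitePi_map_piCongrLeft (fun _ : Fin 2 × V => lam) (Equiv.prodComm V (Fin 2))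
  have e4 := Measure.infinitePi_map_curry (fun (_ : Fin 2) (_ : V) => lam)
  have e5 := Measure.infinitePi_eq_pi (fun (_ : Fin 2) => mu V)
  have e6 := (measurePreserving_piFinTwo (fun (_ : Fin 2) => mu V)).map_eq
  change _ = (mu V).prod (mu V) at e6
  rw [← e6, ← e5]
  unfold mu
  rw [← e4, ← e3]
  change _ = Measure.map _ (Measure.map _ (Measure.map _ (Measure.infinitePi fun _ : V × Fin 2 => lam)))
  rw [← e2, ← e1]
  rw [Measure.map_map, Measure.map_map, Measure.map_map, Measure.map_map]
  · rfl
  all_goals fun_prop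

end Meas

section Mtp

variable {V : Type} {G : SimpleGraph V}

lemma int_shift (φ : G ≃g G) (f : (V → ℝ) → ℝ) (hf : Measurable f) :
    ∫ x, f (fun u => x (φ.symm u)) ∂(mu V) = ∫ x, f x ∂(mu V) := by
  conv_rhs => rw [← mu_inv φ.toEquiv]
  rw [integral_map (measurable_pi_lambda _ fun u => measurable_pi_apply _).aemeasurable (by exact hf.aestronglyMeasurable)]
  rfl

lemma mtp [G.LocallyFinite] (hT : G.IsTree) (hreg : ∀ v : V, (G.neighborSet v).ncard = 6)
    (o : V) (n : ℕ) (F : V → V → (V → ℝ) → ℝ) (hF : ∀ u v, Measurable (F u v))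
    (hE : ∀ (φ : G ≃g G) u v x, F u v (fun u => x (φ.symm u)) = F (φ.symm u) (φ.symm v) x) :
    ∑ w ∈ bl G n o, ∫ x, F o w x ∂(mu V) = ∑ w ∈ bl G n o, ∫ x, F w o x ∂(mu V) := by
  obtain ⟨Φ, h1, h2⟩ := exists_family hT hreg o
  have h3 : ∀ w, (Φ w).symm w = o := fun w => by
    conv_lhs => rw [← h1 w]
    rw [h1 w]
    simpa using congrArg (Φ w).symm (h1 w).symm
  have hm : ∀ w ∈ bl G n o, (Φ w).symm o ∈ bl G n o := by
    intro w hw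
    rw [mem_bl hT] at hw ⊢
    rw [SimpleGraph.dist_comm, dist_symm_iso, h1]
    exact hw
  have hi : ∀ w ∈ bl G n o, (Φ ((Φ w).symm o)).symm o = w := by
    intro w _
    rw [h2]
    exact h1 w
  refine Finset.sum_nbij' (fun w => (Φ w).symm o) (fun w => (Φ w).symm o) hm hm hi hi ?_
  intro w _
  rw [← int_shift (Φ w) _ (hF o w)]
  simp only [hE, h3]

lemma int_trans (hT : G.IsTree) (hreg : ∀ v : V, (G.neighborSet v).ncard = 6)
    (o v : V) (F : V → (V → ℝ) → ℝ) (hF : ∀ u, Measurable (F u))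
    (hE : ∀ (φ : G ≃g G) u x, F u (fun u => x (φ.symm u)) = F (φ.symm u) x) :
    ∫ x, F v x ∂(mu V) = ∫ x, F o x ∂(mu V) := by
  obtain ⟨Φ, h1, h2⟩ := exists_family hT hreg o
  rw [← int_shift (Φ v) _ (hF v)]
  simp only [hE]
  have : (Φ v).symm v = o := by simpa using congrArg (Φ v).symm (h1 v).symm
  rw [this]

/-- a factor of iid colouring -/
structure FI (G : SimpleGraph V) (c : (V → ℝ) → V → Fin 4) : Prop where
  meas : ∀ y, Measurable (fun x => c x y)
  eqv : ∀ (φ : G ≃g G) x, c (fun u => x (φ.symm u)) = fun v => c x (φ.symm v)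

/-- expected number of conflicts -/
noncomputable def Ec (G : SimpleGraph V) [G.LocallyFinite] (c : (V → ℝ) → V → Fin 4) (o : V) : ℝ :=
  ∫ x, (cd G (c x) o : ℝ) ∂(mu V)

lemma meas_cdR [G.LocallyFinite] {X : Type} [MeasurableSpace X] {c : X → V → Fin 4}
    (hc : ∀ y, Measurable (fun x => c x y)) (w : V) :
    Measurable (fun x => (cd G (c x) w : ℝ)) :=
  (measurable_from_top (f := fun n : ℕ => (n : ℝ))).comp (meas_cd hc w)

lemma cd_le [G.LocallyFinite] (hdeg : ∀ v, G.degree v = 6) (c : V → Fin 4) (w : V) :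
    cd G c w ≤ 6 := by
  unfold cd nc
  rw [← hdeg w, ← SimpleGraph.card_neighborFinset_eq_degree]
  exact Finset.card_filter_le _ _

lemma integrable_of_bdd {X : Type} [MeasurableSpace X] {ν : Measure X} [IsProbabilityMeasure ν]
    {f : X → ℝ} (hf : Measurable f) (C : ℝ) (h : ∀ x, |f x| ≤ C) : Integrable f ν :=
  Integrable.of_bound hf.aestronglyMeasurable C (Filter.Eventually.of_forall h)

lemma integrable_cd [G.LocallyFinite] (hdeg : ∀ v, G.degree v = 6) {c : (V → ℝ) → V → Fin 4}
    (hc : FI G c) (w : V) : Integrable (fun x => (cd G (c x) w : ℝ)) (mu V) := by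
  refine integrable_of_bdd (meas_cdR hc.meas w) 6 fun x => ?_
  rw [abs_of_nonneg (by positivity)]
  exact_mod_cast cd_le hdeg _ _

lemma Ec_trans [G.LocallyFinite] (hT : G.IsTree) (hreg : ∀ v : V, (G.neighborSet v).ncard = 6)
    {c : (V → ℝ) → V → Fin 4} (hc : FI G c) (o v : V) : Ec G c v = Ec G c o := by
  refine int_trans hT hreg o v (fun v x => (cd G (c x) v : ℝ)) (meas_cdR hc.meas) ?_
  intro φ u x
  rw [hc.eqv, cd_equiv]

/-- chain density -/
lemma chain_density [Countable V] [G.LocallyFinite] (hT : G.IsTree)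
    (hreg : ∀ v : V, (G.neighborSet v).ncard = 6)
    (hdeg : ∀ v, G.degree v = 6) {c : (V → ℝ) → V → Fin 4} (hc : FI G c) (o : V) (n : ℕ) :
    ((n : ℝ) + 1) * (mu V).real {x | 0 < cd G (c x) o ∧ ¬ Imp G (c x) o (3 * n)} ≤ 1 := by
  classical
  obtain ⟨S, hS⟩ : ∃ S : V → V → Set (V → ℝ), ∀ v w, S v w =
    {x | (0 < cd G (c x) v ∧ ¬ Imp G (c x) v (3 * n)) ∧ Hit G (c x) v n w} := ⟨_, fun _ _ => rfl⟩
  have hS' : ∀ v w x, x ∈ S v w ↔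
      (0 < cd G (c x) v ∧ ¬ Imp G (c x) v (3 * n)) ∧ Hit G (c x) v n w := by
    intro v w x; rw [hS]; rfl
  have hB : ∀ v, MeasurableSet {x | 0 < cd G (c x) v ∧ ¬ Imp G (c x) v (3 * n)} := fun v =>
    (measurableSet_lt measurable_const (meas_cd hc.meas v)).inter (meas_Imp hT hc.meas v _).compl
  have hSm : ∀ v w, MeasurableSet (S v w) := fun v w => by
    rw [hS]; exact (hB v).inter (meas_Hit hc.meas v n w)
  have key := mtp hT hreg o n (fun v w => (S v w).indicator 1)
    (fun v w => measurable_one.indicator (hSm v w)) (by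
      intro φ u v x
      have : (fun u => x (φ.symm u)) ∈ S u v ↔ x ∈ S (φ.symm u) (φ.symm v) := by
        rw [hS', hS']
        rw [hc.eqv, cd_equiv, Imp_equiv hT, Hit_equiv]
      by_cases h : x ∈ S (φ.symm u) (φ.symm v)
      · simp [h, this.2 h]
      · simp [h, mt this.1 h])
  have hint : ∀ v w, Integrable ((S v w).indicator (1 : (V → ℝ) → ℝ)) (mu V) := fun v w =>
    (integrable_const (1:ℝ)).indicator (hSm v w)
  rw [← integral_finsetSum _ (fun w _ => hint o w), ← integral_finsetSum _ (fun w _ => hint w o)] at key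
  have hsum : ∀ x (T : V → Set (V → ℝ)) (s : Finset V),
      ∑ w ∈ s, (T w).indicator (1 : (V → ℝ) → ℝ) x = ((s.filter (fun w => x ∈ T w)).card : ℝ) := by
    intro x T s
    simp [Set.indicator_apply, Finset.sum_boole]
  calc ((n : ℝ) + 1) * (mu V).real {x | 0 < cd G (c x) o ∧ ¬ Imp G (c x) o (3 * n)}
      = ∫ x, {x | 0 < cd G (c x) o ∧ ¬ Imp G (c x) o (3 * n)}.indicator
          (fun _ => (n : ℝ) + 1) x ∂(mu V) := by
        rw [integral_indicator_const _ (hB o)]; simp [mul_comm]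
    _ ≤ ∫ x, ∑ w ∈ bl G n o, (S o w).indicator (1 : (V → ℝ) → ℝ) x ∂(mu V) := by
        apply integral_mono
        · exact (integrable_const _).indicator (hB o)
        · exact integrable_finsetSum _ (fun w _ => hint o w)
        intro x
        simp only [hsum]
        by_cases h : x ∈ {x | 0 < cd G (c x) o ∧ ¬ Imp G (c x) o (3 * n)}
        · rw [Set.indicator_of_mem h]
          have h1 := card_hit hT hdeg h.2 h.1
          have h1' : (n : ℝ) + 1 ≤
              (((bl G n o).filter (fun w => Hit G (c x) o n w)).card : ℝ) := by exact_mod_cast h1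
          refine h1'.trans (Nat.cast_le.2 (Finset.card_le_card ?_))
          intro w hw
          have hw := Finset.mem_filter.1 hw
          exact Finset.mem_filter.2 ⟨hw.1, (hS' _ _ _).2 ⟨h, hw.2⟩⟩
        · rw [Set.indicator_of_notMem h]; positivity
    _ = ∫ x, ∑ w ∈ bl G n o, (S w o).indicator (1 : (V → ℝ) → ℝ) x ∂(mu V) := key
    _ ≤ ∫ x, (1 : ℝ) ∂(mu V) := by
        apply integral_mono
        · exact integrable_finsetSum _ (fun w _ => hint w o)
        · exact integrable_const _
        intro x
        simp only [hsum]
        rw [Nat.cast_le_one, Finset.card_le_one]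
        intro a ha b hb
        have ha := (hS' _ _ _).1 (Finset.mem_filter.1 ha).2
        have hb := (hS' _ _ _).1 (Finset.mem_filter.1 hb).2
        exact hit_unique hT hdeg ha.1.2 ha.2 hb.2
    _ = 1 := by simp

end Mtp

section Improve

variable {V : Type} {G : SimpleGraph V}

lemma exists_j : ∃ (j : ℝ → Fin 4 × Bool) (p : ENNReal), Measurable j ∧ 0 < p ∧
    ∀ a, p ≤ lam (j ⁻¹' {a}) := by
  obtain ⟨j, hj, hm⟩ := exists_map (Fin 4 × Bool) (PMF.uniformOfFintype (Fin 4 × Bool)).toMeasure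
  refine ⟨j, (Fintype.card (Fin 4 × Bool) : ENNReal)⁻¹, hj, by simp, fun a => ?_⟩
  rw [← Measure.map_apply hj (measurableSet_singleton a), hm,
    PMF.toMeasure_apply_singleton _ _ (measurableSet_singleton a), PMF.uniformOfFintype_apply]

lemma act_prob [Countable V] [G.LocallyFinite] (hT : G.IsTree) {j : ℝ → Fin 4 × Bool}
    (hj : Measurable j) {p : ENNReal}
    (hp : 0 < p) (hjp : ∀ a, p ≤ lam (j ⁻¹' {a})) (R : ℕ) (o : V) :
    ∃ κ : ENNReal, 0 < κ ∧ ∀ c : V → Fin 4, Imp G c o R →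
      κ ≤ mu V {y | Act G c (fun v => (j (y v)).1) (fun v => (j (y v)).2) R o} := by
  classical
  refine ⟨p ^ (bl G (2 * R + 3) o).card, ENNReal.pow_pos hp _, ?_⟩
  rintro c ⟨g, hg, hlt⟩
  set a : V → Fin 4 × Bool := fun v => (g v, decide (v = o)) with ha
  have h1 : mu V (Set.pi (bl G (2 * R + 3) o) (fun v => j ⁻¹' {a v})) =
      ∏ v ∈ bl G (2 * R + 3) o, lam (j ⁻¹' {a v}) :=
    Measure.infinitePi_pi (fun _ : V => lam) (fun v _ => hj (measurableSet_singleton _))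
  calc p ^ (bl G (2 * R + 3) o).card = ∏ v ∈ bl G (2 * R + 3) o, p := by simp
    _ ≤ ∏ v ∈ bl G (2 * R + 3) o, lam (j ⁻¹' {a v}) :=
        Finset.prod_le_prod' (fun v _ => hjp _)
    _ = _ := h1.symm
    _ ≤ _ := by
      apply measure_mono
      intro y hy
      have hy' : ∀ v, G.dist o v ≤ 2 * R + 3 → j (y v) = (g v, decide (v = o)) := fun v hv =>
        hy v (by exact_mod_cast (mem_bl hT _ _ _).2 hv)
      refine ⟨?_, ?_, ?_⟩
      · simp [hy' o (by simp)]
      · intro u hu hd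
        simp [hy' u hd, hu]
      · have : pr G c (fun v => (j (y v)).1) o R = g := by
          funext v
          unfold pr
          split_ifs with hv
          · simp [hy' v (by omega)]
          · exact (hg v (by omega)).symm
        rw [this]
        exact hlt

lemma improve [Countable V] [G.LocallyFinite] (hT : G.IsTree)
    (hreg : ∀ v : V, (G.neighborSet v).ncard = 6)
    (hdeg : ∀ v, G.degree v = 6) (o : V) (R : ℕ) :
    ∃ κ : ℝ, 0 < κ ∧ ∀ c, FI G c → ∃ c', FI G c' ∧
      Ec G c' o ≤ Ec G c o - κ * (mu V).real {x | Imp G (c x) o R} := by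
  classical
  obtain ⟨t₁, t₂, ht₁, ht₂, hsplit⟩ := exists_split
  obtain ⟨j, p, hj, hp, hjp⟩ := exists_j
  obtain ⟨κ, hκ, hact⟩ := act_prob (G := G) hT hj hp hjp R o
  have hmS : Measurable (fun x : V → ℝ => ((fun v => t₁ (x v)), (fun v => t₂ (x v)))) := by
    fun_prop
  refine ⟨(min κ 1).toReal, ENNReal.toReal_pos (by positivity) (by simp), fun c hc => ?_⟩
  set C : (V → ℝ) → V → Fin 4 := fun x => c (fun v => t₁ (x v)) with hC
  set Q : (V → ℝ) → V → Fin 4 := fun x v => (j (t₂ (x v))).1 with hQ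
  set M : (V → ℝ) → V → Bool := fun x v => (j (t₂ (x v))).2 with hM
  have hCm : ∀ y, Measurable (fun x => C x y) := fun y => (hc.meas y).comp (by fun_prop)
  have hQm : ∀ y, Measurable (fun x => Q x y) := fun y =>
    measurable_fst.comp (hj.comp (ht₂.comp (measurable_pi_apply y)))
  have hMm : ∀ y, Measurable (fun x => M x y) := fun y =>
    measurable_snd.comp (hj.comp (ht₂.comp (measurable_pi_apply y)))
  have hCe : ∀ (φ : G ≃g G) x, C (fun u => x (φ.symm u)) = fun v => C x (φ.symm v) := fun φ x =>
    hc.eqv φ (fun v => t₁ (x v))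
  have hQe : ∀ (φ : G ≃g G) x, Q (fun u => x (φ.symm u)) = fun v => Q x (φ.symm v) :=
    fun φ x => rfl
  have hMe : ∀ (φ : G ≃g G) x, M (fun u => x (φ.symm u)) = fun v => M x (φ.symm v) :=
    fun φ x => rfl
  have hCF : FI G C := ⟨hCm, hCe⟩
  have hN : FI G (fun x => nw G (C x) (Q x) (M x) R) := by
    refine ⟨meas_nw hCm hQm hMm R, fun φ x => ?_⟩
    simp only [hCe, hQe, hMe]
    rw [nw_equiv hT]
  refine ⟨_, hN, ?_⟩
  have key := mtp hT hreg o (R + 1) (fun v w x => Fl G (C x) (Q x) (M x) R v w)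
    (fun v w => meas_Fl hCm hQm hMm R v w) (by
      intro φ u v x
      simp only [hCe, hQe, hMe]
      rw [Fl_equiv hT])
  have hint : ∀ v w, Integrable (fun x => Fl G (C x) (Q x) (M x) R v w) (mu V) := by
    intro v w
    refine integrable_of_bdd (meas_Fl hCm hQm hMm R v w) 6 fun x => ?_
    have h1 : (cd G (nw G (C x) (Q x) (M x) R) w : ℝ) ≤ 6 := by exact_mod_cast cd_le hdeg _ _
    have h2 : (cd G (C x) w : ℝ) ≤ 6 := by exact_mod_cast cd_le hdeg _ _
    have h3 : (0 : ℝ) ≤ (cd G (nw G (C x) (Q x) (M x) R) w : ℝ) := by positivity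
    have h4 : (0 : ℝ) ≤ (cd G (C x) w : ℝ) := by positivity
    unfold Fl
    rw [abs_le]
    split_ifs <;> constructor <;> linarith
  rw [← integral_finsetSum _ (fun w _ => hint o w), ← integral_finsetSum _ (fun w _ => hint w o)] at key
  simp only [Fl_in hT] at key
  rw [integral_sub (integrable_cd hdeg hN o) (integrable_cd hdeg hCF o)] at key
  have hAm := meas_Act (G := G) hCm hQm hMm R o
  have hout : ∫ x, ∑ w ∈ bl G (R + 1) o, Fl G (C x) (Q x) (M x) R o w ∂(mu V) ≤
      - (mu V).real {x | Act G (C x) (Q x) (M x) R o} := by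
    calc _ ≤ ∫ x, {x | Act G (C x) (Q x) (M x) R o}.indicator (fun _ => (-1 : ℝ)) x ∂(mu V) := by
          apply integral_mono
          · exact integrable_finsetSum _ (fun w _ => hint o w)
          · exact (integrable_const _).indicator hAm
          intro x
          refine (Fl_out hT _ _ _ _ _).trans (le_of_eq ?_)
          simp only [Set.indicator_apply, Set.mem_ofPred_eq]
      _ = _ := by rw [integral_indicator_const _ hAm]; simp
  have hEC : Ec G C o = Ec G c o := by
    have h1 : (mu V).map (fun x v => t₁ (x v)) = mu V := by
      have := congrArg (Measure.map Prod.fst) (hsplit V)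
      rw [Measure.map_map measurable_fst hmS, ← Measure.fst, Measure.fst_prod] at this
      exact this
    unfold Ec
    conv_rhs => rw [← h1]
    rw [integral_map (Measurable.aemeasurable (by fun_prop)) (meas_cdR hc.meas o).aestronglyMeasurable]
  have hA : (min κ 1).toReal * (mu V).real {x | Imp G (c x) o R} ≤
      (mu V).real {x | Act G (C x) (Q x) (M x) R o} := by
    rw [measureReal_def, measureReal_def, ← ENNReal.toReal_mul]
    apply ENNReal.toReal_mono (measure_ne_top _ _)
    set D : Set ((V → ℝ) × (V → ℝ)) :=
      {z | Act G (c z.1) (fun v => (j (z.2 v)).1) (fun v => (j (z.2 v)).2) R o} with hD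
    have hDm : MeasurableSet D := by
      apply meas_Act
      · exact fun y => (hc.meas y).comp measurable_fst
      · exact fun y => measurable_fst.comp (hj.comp ((measurable_pi_apply y).comp measurable_snd))
      · exact fun y => measurable_snd.comp (hj.comp ((measurable_pi_apply y).comp measurable_snd))
    have h1 : mu V {x | Act G (C x) (Q x) (M x) R o} = ((mu V).prod (mu V)) D := by
      rw [← hsplit, Measure.map_apply hmS hDm]
      rfl
    rw [h1, Measure.prod_apply hDm, ← lintegral_indicator_const (meas_Imp hT hc.meas o R)]
    apply lintegral_mono
    intro x
    by_cases h : x ∈ {x | Imp G (c x) o R}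
    · rw [Set.indicator_of_mem h]
      have h' : Imp G (c x) o R := h
      exact (min_le_left κ 1).trans (hact (c x) h')
    · rw [Set.indicator_of_notMem h]; exact bot_le
  change Ec G _ o ≤ _
  have e1 : Ec G (fun x => nw G (C x) (Q x) (M x) R) o - Ec G C o ≤
    - (mu V).real {x | Act G (C x) (Q x) (M x) R o} := by
    unfold Ec
    rw [← key]; exact hout
  linarith

lemma exists_small [Countable V] [G.LocallyFinite] (hT : G.IsTree)
    (hreg : ∀ v : V, (G.neighborSet v).ncard = 6)
    (hdeg : ∀ v, G.degree v = 6) (o : V) (ε : ℝ) (hε : 0 < ε) :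
    ∃ c, FI G c ∧ Ec G c o ≤ ε := by
  have hnn : ∀ c, 0 ≤ Ec G c o := fun c => integral_nonneg fun x => by positivity
  set S : Set ℝ := {r | ∃ c, FI G c ∧ Ec G c o = r} with hS
  have hne : S.Nonempty := ⟨_, fun _ _ => 0, ⟨fun _ => measurable_const, fun _ _ => rfl⟩, rfl⟩
  have hbd : BddBelow S := ⟨0, by rintro _ ⟨c, _, rfl⟩; exact hnn c⟩
  by_contra hcon
  push Not at hcon
  have hp : 0 < sInf S := by
    refine lt_of_lt_of_le hε (le_csInf hne ?_)
    rintro _ ⟨c, hc, rfl⟩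
    exact (hcon c hc).le
  set P := sInf S with hP
  obtain ⟨n, hn⟩ := exists_nat_one_div_lt (show 0 < P / 12 by positivity)
  obtain ⟨κ, hκ, himp⟩ := improve hT hreg hdeg o (3 * n)
  obtain ⟨_, ⟨c, hc, rfl⟩, hlt⟩ := exists_lt_of_csInf_lt hne
    (show sInf S < P + κ * (P / 12) by rw [← hP]; have := mul_pos hκ (show 0 < P / 12 by positivity); linarith)
  obtain ⟨c', hc', hle⟩ := himp c hc
  have h1 : P ≤ Ec G c' o := csInf_le hbd ⟨c', hc', rfl⟩
  have h0 : P ≤ Ec G c o := csInf_le hbd ⟨c, hc, rfl⟩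
  have h2 : (mu V).real {x | Imp G (c x) o (3 * n)} < P / 12 := by
    by_contra h
    push Not at h
    have := mul_le_mul_of_nonneg_left h hκ.le
    linarith
  have h3 := chain_density hT hreg hdeg hc o n
  have h4 : (mu V).real {x | 0 < cd G (c x) o ∧ ¬ Imp G (c x) o (3 * n)} < P / 12 := by
    refine lt_of_le_of_lt ?_ hn
    rw [le_div_iff₀ (by positivity), mul_comm]
    exact h3
  have hpos : MeasurableSet {x | 0 < cd G (c x) o} :=
    measurableSet_lt measurable_const (meas_cd hc.meas o)
  have h5 : Ec G c o ≤ 6 * (mu V).real {x | 0 < cd G (c x) o} := by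
    calc Ec G c o ≤ ∫ x, {x | 0 < cd G (c x) o}.indicator (fun _ => (6 : ℝ)) x ∂(mu V) := by
          apply integral_mono (integrable_cd hdeg hc o) ((integrable_const _).indicator hpos)
          intro x
          by_cases h : x ∈ {x | 0 < cd G (c x) o}
          · rw [Set.indicator_of_mem h]
            change (cd G (c x) o : ℝ) ≤ 6
            exact_mod_cast cd_le hdeg _ _
          · rw [Set.indicator_of_notMem h]
            have : cd G (c x) o = 0 := by simpa using h
            simp [this]
      _ = _ := by rw [integral_indicator_const _ hpos]; simp [mul_comm]
  have h6 : (mu V).real {x | 0 < cd G (c x) o} ≤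
      (mu V).real {x | 0 < cd G (c x) o ∧ ¬ Imp G (c x) o (3 * n)} +
        (mu V).real {x | Imp G (c x) o (3 * n)} := by
    refine (measureReal_mono ?_).trans (measureReal_union_le _ _)
    intro x hx
    by_cases h : Imp G (c x) o (3 * n)
    · exact Or.inr h
    · exact Or.inl ⟨hx, h⟩
  linarith

end Improve
end T6

/-- For every ε > 0, the 6-regular tree admits an fiid labelling with 5 labels which is
a.e. proper (at each non-red vertex) and assigns the label 4 to a given vertex with probability at most ε. -/
theorem fiid_red_labelling_of_T6
    (V : Type) [Countable V] [Infinite V]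
    (G : SimpleGraph V) (hconn : G.Connected) (hacyc : G.IsAcyclic)
    (hreg : ∀ v : V, (G.neighborSet v).ncard = 6)
    (μ : Measure (V → ℝ)) [IsProbabilityMeasure μ]
    (hμ : ∀ s : Finset V,
      Measure.map (fun (x : V → ℝ) (v : s) => x v) μ
        = Measure.pi (fun _ : s => volume.restrict (Set.Icc (0:ℝ) 1)))
    (ε : ℝ) (hε : 0 < ε) :
    ∃ f : (V → ℝ) → (V → Fin 5),
      Measurable f ∧
      (∀ (φ : G ≃g G) (x : V → ℝ) (v : V),
        f (fun u => x (φ.symm u)) v = f x (φ.symm v)) ∧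
      (∀ᵐ x ∂μ, ∀ u v : V, G.Adj u v → f x v ≠ 4 → f x u ≠ f x v) ∧
      (∀ v : V, μ {x | f x v = 4} ≤ ENNReal.ofReal ε) := by
  classical
  have hT : G.IsTree := ⟨hconn, hacyc⟩
  let _i : G.LocallyFinite := fun v =>
    (Set.finite_of_ncard_ne_zero (by rw [hreg v]; decide) : (G.neighborSet v).Finite).fintype
  have hdeg : ∀ v, G.degree v = 6 := by
    intro v
    rw [← hreg v, Set.ncard_eq_toFinset_card', ← SimpleGraph.card_neighborFinset_eq_degree]
    rfl
  have hmu := T6.eq_mu μ hμ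
  subst hmu
  obtain ⟨o⟩ : Nonempty V := inferInstance
  obtain ⟨c, hc, hE⟩ := T6.exists_small hT hreg hdeg o ε hε
  have h4 : ∀ k : Fin 4, Fin.castSucc k ≠ (4 : Fin 5) := by decide
  have hf4 : ∀ x v, (if 0 < T6.cd G (c x) v then (4 : Fin 5) else Fin.castSucc (c x v)) = 4 ↔
      0 < T6.cd G (c x) v := by
    intro x v
    split_ifs with h
    · simp [h]
    · simp [h, h4]
  have hpos : ∀ v, MeasurableSet {x | 0 < T6.cd G (c x) v} := fun v =>
    measurableSet_lt measurable_const (T6.meas_cd hc.meas v)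
  refine ⟨fun x v => if 0 < T6.cd G (c x) v then 4 else Fin.castSucc (c x v), ?_, ?_, ?_, ?_⟩
  · refine measurable_pi_lambda _ fun v => Measurable.ite (hpos v) measurable_const ?_
    exact (measurable_from_top (f := Fin.castSucc)).comp (hc.meas v)
  · intro φ x v
    simp only
    rw [hc.eqv, T6.cd_equiv]
  · refine Filter.Eventually.of_forall fun x u v huv hv heq => ?_
    have hv0 : ¬ 0 < T6.cd G (c x) v := fun h => hv ((hf4 x v).2 h)
    have hu0 : ¬ 0 < T6.cd G (c x) u := fun h => hv (heq ▸ (hf4 x u).2 h)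
    simp only [if_neg hv0, if_neg hu0] at heq
    have heq := Fin.castSucc_injective _ heq
    apply hv0
    unfold T6.cd T6.nc
    rw [Finset.card_pos]
    exact ⟨u, Finset.mem_filter.2 ⟨(G.mem_neighborFinset v u).2 huv.symm, heq⟩⟩
  · intro v
    simp only [hf4]
    have h1 : (T6.mu V).real {x | 0 < T6.cd G (c x) v} ≤ T6.Ec G c v := by
      calc _ = ∫ x, {x | 0 < T6.cd G (c x) v}.indicator (fun _ => (1 : ℝ)) x ∂(T6.mu V) := by
            rw [integral_indicator_const _ (hpos v)]; simp
        _ ≤ _ := by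
            apply integral_mono ((integrable_const _).indicator (hpos v))
              (T6.integrable_cd hdeg hc v)
            intro x
            by_cases h : x ∈ {x | 0 < T6.cd G (c x) v}
            · rw [Set.indicator_of_mem h]
              change (1 : ℝ) ≤ (T6.cd G (c x) v : ℝ)
              exact_mod_cast (show 0 < T6.cd G (c x) v from h)
            · rw [Set.indicator_of_notMem h]
              positivity
    rw [T6.Ec_trans hT hreg hc o v] at h1
    rw [← ENNReal.ofReal_toReal (measure_ne_top (T6.mu V) _)]
    exact ENNReal.ofReal_le_ofReal (h1.trans hE)
end
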